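/- arXiv:1011.6195 — 3 statements merged into one kernel-verified Lean document; each statement's English description precedes it below -/
import Mathlib

section
/- For every complex q with |q| < √2 - 1, both of the following series converge absolutely and the identity holds: (-2q³(1-q)²/(1-2q)²) · ∑_{m=1}^∞ [ (-1)^m q^{2m} / ((1-2q)^m (1-q-q^{m+1})) · ∏_{k=1}^{m-1} (1-q-q^k+q^{k+1}-q^{k+2})/(1-q-q^{k+1}) ] + 2q(3-10q+9q²-q³)/((1-2q)²(1-q)) = C(q) + A(q) · ((v(q);q)_∞/(q u(q);q)_∞) · ∑_{n=1}^∞ (-1)^n (q^{2n}/(1-2q)^n) · (u(q) q^{n+1};q)_∞/(v(q) q^n;q)_∞. In particular, the common value PA(q) defines an analytic function of q on the open disc |q| < √2 - 1. -/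
open Complex Filter Asymptotics Topology

noncomputable section

/-- finite q-Pochhammer symbol `(x;q)_n` -/
def qPF (x q : ℂ) (n : ℕ) : ℂ := ∏ i ∈ Finset.range n, (1 - x * q ^ i)

/-- infinite q-Pochhammer symbol `(x;q)_∞` -/
def qPI (x q : ℂ) : ℂ := ∏' i : ℕ, (1 - x * q ^ i)

def uF (q : ℂ) : ℂ := q / (1 - q)
def vF (q : ℂ) : ℂ := (1 - q + q ^ 2) / (1 - q)
def aF (q : ℂ) : ℂ := q ^ 2 / (1 - q + q ^ 2)
def AF (q : ℂ) : ℂ := 2 * q * (1 - q) ^ 2 / (1 - 2 * q) ^ 2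
def CF (q : ℂ) : ℂ := 2 * q * (3 - 10 * q + 9 * q ^ 2 - q ^ 3) / ((1 - q) * (1 - 2 * q) ^ 2)
def DF (q : ℂ) : ℂ := CF q - (q ^ 2 / (1 - q) ^ 2) * AF q * qPI (vF q) q / qPI (aF q * vF q) q

/-- the `m`-th term (for `m ≥ 1`) of the explicit series for `PA(q)` -/
def PAterm (q : ℂ) (m : ℕ) : ℂ :=
  (-1) ^ m * q ^ (2 * m) / ((1 - 2 * q) ^ m * (1 - q - q ^ (m + 1))) *
    ∏ k ∈ Finset.Icc 1 (m - 1),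
      ((1 - q - q ^ k + q ^ (k + 1) - q ^ (k + 2)) / (1 - q - q ^ (k + 1)))

/-- the explicit convergent series defining `PA(q)` for small `q` -/
def PAseries (q : ℂ) : ℂ :=
  (-2 * q ^ 3 * (1 - q) ^ 2 / (1 - 2 * q) ^ 2) * (∑' m : ℕ, PAterm q (m + 1))
    + 2 * q * (3 - 10 * q + 9 * q ^ 2 - q ^ 3) / ((1 - 2 * q) ^ 2 * (1 - q))

/-- the `n`-th term (for `n ≥ 1`) of the q-hypergeometric series -/
def qHypTerm (q : ℂ) (n : ℕ) : ℂ :=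
  (-1) ^ n * (q ^ (2 * n) / (1 - 2 * q) ^ n) *
    (qPI (uF q * q ^ (n + 1)) q / qPI (vF q * q ^ n) q)

/-!
Both series are the same up to a constant factor. With `u = uF q` and `v = vF q`, the factors of
`PAterm` are `(1 - v q ^ k) / (1 - u q ^ k)`, so `PAterm q (n + 1)` is a geometric factor times
`(v q; q)_n / (u q; q)_{n + 1}`. Splitting the first factors off the infinite products in `qHypTerm`
turns the latter into the same quotient times `(u q; q)_∞ / (v q; q)_∞`.

Since `v - u = 1 - q`, the quotients `(v q; q)_n / (u q; q)_n` are bounded uniformly in `n`, and the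
series are dominated by a geometric series of ratio `r ^ 2 / (1 - 2 r)` on `|q| ≤ r`. For
`0 ≤ r < 1 / 2` this ratio is less than `1` exactly when `r < √2 - 1`, and the Weierstrass M-test
gives analyticity.
-/

lemma sq_lt_one_sub_two_mul {r : ℝ} (h0 : 0 ≤ r) (hr : r < √2 - 1) : r ^ 2 < 1 - 2 * r := by
  have h : (r + 1) ^ 2 < 2 := (Real.lt_sqrt (by linarith)).1 (by linarith)
  linarith

lemma one_sub_norm_le_norm_one_sub {R : Type*} [SeminormedRing R] [NormOneClass R] (x : R) :
    1 - ‖x‖ ≤ ‖1 - x‖ := by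
  simpa only [norm_one] using norm_sub_norm_le 1 x

lemma one_sub_ne_zero_of_norm_lt_one {R : Type*} [SeminormedRing R] [NormOneClass R] {x : R}
    (hx : ‖x‖ < 1) : 1 - x ≠ 0 := by
  intro h
  have := one_sub_norm_le_norm_one_sub x
  rw [h, norm_zero] at this
  linarith

lemma norm_prod_range_one_add_le_exp {R : Type*} [NormedCommRing R] [NormOneClass R]
    {f : ℕ → R} {c r : ℝ} (h0 : 0 ≤ r) (hr : r < 1) (hf : ∀ i, ‖f i‖ ≤ c * r ^ i) (n : ℕ) :
    ‖∏ i ∈ Finset.range n, (1 + f i)‖ ≤ Real.exp (c / (1 - r)) := by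
  have hsum : ∑ i ∈ Finset.range n, ‖f i‖ ≤ c / (1 - r) := by
    have hgeom : HasSum (fun i => c * r ^ i) (c / (1 - r)) :=
      (hasSum_geometric_of_lt_one h0 hr).mul_left c
    exact (Finset.sum_le_sum fun i _ => hf i).trans <|
      sum_le_hasSum _ (fun i _ => (norm_nonneg (f i)).trans (hf i)) hgeom
  calc ‖∏ i ∈ Finset.range n, (1 + f i)‖
      ≤ ‖∏ i ∈ Finset.range n, (1 + f i) - 1‖ + ‖(1 : R)‖ := norm_le_norm_sub_add _ _
    _ ≤ Real.exp (∑ i ∈ Finset.range n, ‖f i‖) - 1 + 1 :=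
        add_le_add (Finset.norm_prod_one_add_sub_one_le _ f) norm_one.le
    _ ≤ Real.exp (c / (1 - r)) := by
        rw [sub_add_cancel]
        exact Real.exp_le_exp.2 hsum

lemma qPF_succ (x q : ℂ) (n : ℕ) : qPF x q (n + 1) = qPF x q n * (1 - x * q ^ n) :=
  Finset.prod_range_succ _ _

lemma qPF_ne_zero {x q : ℂ} (hx : ∀ i, 1 - x * q ^ i ≠ 0) (n : ℕ) : qPF x q n ≠ 0 :=
  Finset.prod_ne_zero_iff.2 fun i _ => hx i

lemma norm_qPF_div_qPF_le {x y q : ℂ} {δ : ℝ} (hq : ‖q‖ < 1) (hδ : 0 < δ)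
    (hx : ∀ i, δ ≤ ‖1 - x * q ^ i‖) (n : ℕ) :
    ‖qPF y q n / qPF x q n‖ ≤ Real.exp (‖y - x‖ / δ / (1 - ‖q‖)) := by
  have hfactor (i : ℕ) :
      (1 - y * q ^ i) / (1 - x * q ^ i) = 1 + -((y - x) * q ^ i / (1 - x * q ^ i)) := by
    have : 1 - x * q ^ i ≠ 0 := norm_pos_iff.1 (hδ.trans_le (hx i))
    rw [div_eq_iff this, add_mul, neg_mul, div_mul_cancel₀ _ this]
    ring
  rw [qPF, qPF, ← Finset.prod_div_distrib]
  simp only [hfactor]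
  refine norm_prod_range_one_add_le_exp (norm_nonneg q) hq (fun i => ?_) n
  rw [norm_neg, norm_div, norm_mul, norm_pow, div_mul_eq_mul_div]
  gcongr
  exact hx i

lemma summable_norm_neg_mul_pow {𝕜 : Type*} [NormedField 𝕜] {q : 𝕜} (x : 𝕜) (hq : ‖q‖ < 1) :
    Summable fun i : ℕ => ‖-(x * q ^ i)‖ := by
  simp only [norm_neg, norm_mul, norm_pow]
  exact (summable_geometric_of_lt_one (norm_nonneg q) hq).mul_left _

lemma multipliable_one_sub_mul_pow {𝕜 : Type*} [NormedField 𝕜] [CompleteSpace 𝕜] {q : 𝕜}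
    (x : 𝕜) (hq : ‖q‖ < 1) :
    Multipliable fun i : ℕ => 1 - x * q ^ i := by
  simpa only [sub_eq_add_neg] using
    multipliable_one_add_of_summable (summable_norm_neg_mul_pow x hq)

lemma qPI_ne_zero {x q : ℂ} (hq : ‖q‖ < 1) (hx : ∀ i : ℕ, 1 - x * q ^ i ≠ 0) :
    qPI x q ≠ 0 := by
  simp only [sub_eq_add_neg] at hx
  simpa only [qPI, sub_eq_add_neg] using
    tprod_one_add_ne_zero_of_summable hx (summable_norm_neg_mul_pow x hq)

lemma qPF_mul_qPI {q : ℂ} (x : ℂ) (hq : ‖q‖ < 1) (n : ℕ) :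
    qPF x q n * qPI (x * q ^ n) q = qPI x q := by
  have hshift (i : ℕ) : 1 - x * q ^ n * q ^ i = 1 - x * q ^ (i + n) := by ring
  have htail := multipliable_one_sub_mul_pow (x * q ^ n) hq
  simp only [qPI, hshift] at htail ⊢
  exact Multipliable.prod_mul_tprod_nat_mul' (f := fun i => 1 - x * q ^ i) htail

lemma qPI_tail_div_qPI_tail {x y q : ℂ} (hq : ‖q‖ < 1) (hx : ∀ i : ℕ, 1 - x * q ^ i ≠ 0)
    (hy : ∀ i : ℕ, 1 - y * q ^ i ≠ 0) (m n : ℕ) :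
    qPI (x * q ^ m) q / qPI (y * q ^ n) q =
      qPI x q / qPI y q * (qPF y q n / qPF x q m) := by
  have hxm := qPF_ne_zero hx m
  have hyn := qPF_ne_zero hy n
  rw [← qPF_mul_qPI x hq m, ← qPF_mul_qPI y hq n]
  field_simp

lemma one_sub_uF_mul_pow {q : ℂ} (h1 : 1 - q ≠ 0) (k : ℕ) :
    1 - uF q * q ^ k = (1 - q - q ^ (k + 1)) / (1 - q) := by
  unfold uF
  field_simp
  ring

lemma one_sub_vF_mul_pow {q : ℂ} (h1 : 1 - q ≠ 0) (k : ℕ) :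
    1 - vF q * q ^ k = (1 - q - q ^ k + q ^ (k + 1) - q ^ (k + 2)) / (1 - q) := by
  unfold vF
  field_simp
  ring

lemma vF_sub_uF {q : ℂ} (h1 : 1 - q ≠ 0) : vF q - uF q = 1 - q := by
  unfold vF uF
  field_simp
  ring

lemma one_sub_vF {q : ℂ} (h1 : 1 - q ≠ 0) : 1 - vF q = -q ^ 2 / (1 - q) := by
  unfold vF
  field_simp
  ring

lemma prod_Icc_eq_qPF_div_qPF {q : ℂ} (h1 : 1 - q ≠ 0) (n : ℕ) :
    ∏ k ∈ Finset.Icc 1 n,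
        ((1 - q - q ^ k + q ^ (k + 1) - q ^ (k + 2)) / (1 - q - q ^ (k + 1))) =
      qPF (vF q * q) q n / qPF (uF q * q) q n := by
  have hfactor (k : ℕ) :
      (1 - q - q ^ k + q ^ (k + 1) - q ^ (k + 2)) / (1 - q - q ^ (k + 1)) =
        (1 - vF q * q ^ k) / (1 - uF q * q ^ k) := by
    rw [one_sub_vF_mul_pow h1, one_sub_uF_mul_pow h1, div_div_div_cancel_right₀ h1]
  rw [← Finset.Ico_add_one_right_eq_Icc, Finset.prod_Ico_eq_prod_range, Nat.add_sub_cancel, qPF,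
    qPF, ← Finset.prod_div_distrib]
  exact Finset.prod_congr rfl fun i _ => by
    rw [hfactor, add_comm 1 i, pow_succ', mul_assoc, mul_assoc]

lemma PAterm_succ {q : ℂ} (h1 : 1 - q ≠ 0) (n : ℕ) :
    PAterm q (n + 1) = (-(q ^ 2 / (1 - 2 * q))) ^ (n + 1) / (1 - q - q ^ (n + 2)) *
      (qPF (vF q * q) q n / qPF (uF q * q) q n) := by
  rw [PAterm, Nat.add_sub_cancel, prod_Icc_eq_qPF_div_qPF h1, neg_pow (q ^ 2 / (1 - 2 * q)),
    div_pow, ← pow_mul, ← mul_div_assoc ((-1) ^ (n + 1)), div_div]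

lemma qHypTerm_succ {q : ℂ} (hq : ‖q‖ < 1) (hu : ∀ i : ℕ, 1 - uF q * q * q ^ i ≠ 0)
    (hv : ∀ i : ℕ, 1 - vF q * q * q ^ i ≠ 0) (n : ℕ) :
    qHypTerm q (n + 1) =
      (1 - q) * (qPI (uF q * q) q / qPI (vF q * q) q) * PAterm q (n + 1) := by
  have h1 := one_sub_ne_zero_of_norm_lt_one hq
  have hden : qPF (uF q * q) q (n + 1) =
      qPF (uF q * q) q n * ((1 - q - q ^ (n + 2)) / (1 - q)) := by
    rw [qPF_succ, mul_assoc, ← pow_succ', one_sub_uF_mul_pow h1]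
  have htails := qPI_tail_div_qPI_tail hq hu hv (n + 1) n
  rw [mul_assoc (uF q), mul_assoc (vF q), ← pow_succ', ← pow_succ', hden] at htails
  rw [qHypTerm, htails, PAterm_succ h1, neg_pow (q ^ 2 / (1 - 2 * q)), div_pow, ← pow_mul]
  field_simp

lemma PAseries_eq {q : ℂ} (hq : ‖q‖ < 1) (hu : ∀ i : ℕ, 1 - uF q * q * q ^ i ≠ 0)
    (hv : ∀ i : ℕ, 1 - vF q * q * q ^ i ≠ 0) :
    PAseries q = CF q + AF q * (qPI (vF q) q / qPI (q * uF q) q) *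
      ∑' n : ℕ, qHypTerm q (n + 1) := by
  have h1 := one_sub_ne_zero_of_norm_lt_one hq
  have hU : qPI (uF q * q) q ≠ 0 := qPI_ne_zero hq hu
  have hV : qPI (vF q * q) q ≠ 0 := qPI_ne_zero hq hv
  have hvF : qPI (vF q) q = -q ^ 2 / (1 - q) * qPI (vF q * q) q := by
    simpa only [qPF, Finset.prod_range_one, pow_zero, pow_one, mul_one, one_sub_vF h1] using
      (qPF_mul_qPI (vF q) hq 1).symm
  simp only [qHypTerm_succ hq hu hv, tsum_mul_left]
  rw [hvF, mul_comm q (uF q), PAseries, CF, AF]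
  generalize qPI (uF q * q) q = U at *
  generalize qPI (vF q * q) q = V at *
  field_simp
  ring

section Disc

variable {q : ℂ} {r : ℝ}

lemma le_norm_one_sub_sub_pow (hq : ‖q‖ ≤ r) (hr : r ≤ 1) (n : ℕ) :
    1 - r - r ^ 2 ≤ ‖1 - q - q ^ (n + 2)‖ := by
  have hpow : ‖q ^ (n + 2)‖ ≤ r ^ 2 := by
    have h0 := norm_nonneg q
    rw [norm_pow]
    exact (pow_le_pow_of_le_one h0 (hq.trans hr) (Nat.le_add_left 2 n)).trans
      (pow_le_pow_left₀ h0 hq 2)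
  have := one_sub_norm_le_norm_one_sub (q + q ^ (n + 2))
  rw [← sub_sub] at this
  linarith [norm_add_le q (q ^ (n + 2))]

lemma le_norm_one_sub_uF_mul_pow (hq : ‖q‖ ≤ r) (hr : r < 1) (n : ℕ) :
    (1 - r - r ^ 2) / (1 + r) ≤ ‖1 - uF q * q * q ^ n‖ := by
  have h1 := one_sub_ne_zero_of_norm_lt_one (hq.trans_lt hr)
  have hnorm : ‖1 - q‖ ≤ 1 + r := (norm_sub_le 1 q).trans (by rw [norm_one]; gcongr)
  rw [mul_assoc, ← pow_succ', one_sub_uF_mul_pow h1, norm_div]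
  gcongr
  exact le_norm_one_sub_sub_pow hq hr.le n

lemma one_sub_uF_mul_pow_ne_zero (hq : ‖q‖ + ‖q‖ ^ 2 < 1) (n : ℕ) :
    1 - uF q * q * q ^ n ≠ 0 := by
  have h0 := norm_nonneg q
  have hq1 : ‖q‖ < 1 := by nlinarith
  have hpos : 0 < (1 - ‖q‖ - ‖q‖ ^ 2) / (1 + ‖q‖) := div_pos (by linarith) (by linarith)
  exact norm_pos_iff.1 (hpos.trans_le (le_norm_one_sub_uF_mul_pow le_rfl hq1 n))

lemma one_sub_vF_mul_pow_ne_zero (hq1 : ‖q‖ < 1) (hq : ‖q‖ ^ 3 < (1 - ‖q‖) ^ 2) (n : ℕ) :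
    1 - vF q * q * q ^ n ≠ 0 := by
  have h0 := norm_nonneg q
  have h1 := one_sub_ne_zero_of_norm_lt_one hq1
  rw [mul_assoc, ← pow_succ', one_sub_vF_mul_pow h1]
  refine div_ne_zero (fun h => ?_) h1
  have heq : (1 - q) * (1 - q ^ (n + 1)) = q ^ (n + 3) := by linear_combination h
  have hlow : (1 - ‖q‖) ^ 2 ≤ ‖q ^ (n + 3)‖ := by
    have hpow : ‖q ^ (n + 1)‖ ≤ ‖q‖ := by
      rw [norm_pow]
      exact pow_le_of_le_one h0 hq1.le n.succ_ne_zero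
    rw [← heq, norm_mul, sq]
    gcongr
    · exact one_sub_norm_le_norm_one_sub q
    · exact (sub_le_sub_left hpow 1).trans (one_sub_norm_le_norm_one_sub _)
  have hup : ‖q ^ (n + 3)‖ ≤ ‖q‖ ^ 3 := by
    rw [norm_pow]
    exact pow_le_pow_of_le_one h0 hq1.le (Nat.le_add_left 3 n)
  linarith

lemma one_sub_two_mul_le_norm (hq : ‖q‖ ≤ r) : 1 - 2 * r ≤ ‖1 - 2 * q‖ := by
  have := one_sub_norm_le_norm_one_sub (2 * q)
  rw [norm_mul, RCLike.norm_two] at this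
  linarith

lemma norm_PAterm_succ_le (hq : ‖q‖ ≤ r) (hr : r < 1 / 2) (n : ℕ) :
    ‖PAterm q (n + 1)‖ ≤ (r ^ 2 / (1 - 2 * r)) ^ (n + 1) / (1 - r - r ^ 2) *
      Real.exp ((1 + r) * r / ((1 - r - r ^ 2) / (1 + r)) / (1 - r)) := by
  have h0 : 0 ≤ r := (norm_nonneg q).trans hq
  have hr1 : r < 1 := by linarith
  have h2 : 0 < 1 - 2 * r := by linarith
  have hδ : 0 < 1 - r - r ^ 2 := by nlinarith
  have h1 := one_sub_ne_zero_of_norm_lt_one (hq.trans_lt hr1)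
  have hdiff : ‖vF q * q - uF q * q‖ ≤ (1 + r) * r := by
    rw [← sub_mul, vF_sub_uF h1, norm_mul]
    gcongr
    exact (norm_sub_le 1 q).trans (by rw [norm_one]; gcongr)
  have hquot : ‖qPF (vF q * q) q n / qPF (uF q * q) q n‖ ≤
      Real.exp ((1 + r) * r / ((1 - r - r ^ 2) / (1 + r)) / (1 - r)) := by
    refine (norm_qPF_div_qPF_le (hq.trans_lt hr1) (by positivity)
      (le_norm_one_sub_uF_mul_pow hq hr1) n).trans ?_
    have : 0 < 1 - r := by linarith
    gcongr
  rw [PAterm_succ h1, norm_mul, norm_div, norm_pow, norm_neg, norm_div, norm_pow q]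
  gcongr
  · exact one_sub_two_mul_le_norm hq
  · exact le_norm_one_sub_sub_pow hq hr1.le n

lemma exists_summable_norm_PAterm_succ_le (h0 : 0 ≤ r) (hr : r < √2 - 1) :
    ∃ b : ℕ → ℝ, Summable b ∧ ∀ n q, ‖q‖ ≤ r → ‖PAterm q (n + 1)‖ ≤ b n := by
  have hr' := sq_lt_one_sub_two_mul h0 hr
  have h2 : 0 < 1 - 2 * r := (sq_nonneg r).trans_lt hr'
  have hgeom : Summable fun n : ℕ => (r ^ 2 / (1 - 2 * r)) ^ n :=
    summable_geometric_of_lt_one (by positivity) ((div_lt_one h2).2 hr')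
  exact ⟨_, (((summable_nat_add_iff 1).2 hgeom).div_const _).mul_right _,
    fun n q hq => norm_PAterm_succ_le hq (by linarith) n⟩

lemma summable_norm_PAterm_succ (hq : ‖q‖ < √2 - 1) :
    Summable fun n => ‖PAterm q (n + 1)‖ := by
  obtain ⟨b, hb, hle⟩ := exists_summable_norm_PAterm_succ_le (norm_nonneg q) hq
  exact hb.of_nonneg_of_le (fun _ => norm_nonneg _) fun n => hle n q le_rfl

lemma differentiableAt_PAterm_succ (h2 : 1 - 2 * q ≠ 0) (hden : ∀ n, 1 - q - q ^ (n + 2) ≠ 0)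
    (n : ℕ) : DifferentiableAt ℂ (fun z => PAterm z (n + 1)) q := by
  unfold PAterm
  refine .mul (.div (by fun_prop) (by fun_prop) (mul_ne_zero (pow_ne_zero _ h2) (hden n))) ?_
  refine .fun_finsetProd fun k hk => .div (by fun_prop) (by fun_prop) ?_
  obtain ⟨j, rfl⟩ := Nat.exists_eq_add_of_le' (Finset.mem_Icc.1 hk).1
  exact hden j

lemma differentiableAt_PAseries (hq : ‖q‖ < √2 - 1) : DifferentiableAt ℂ PAseries q := by
  obtain ⟨r, hqr, hr⟩ := exists_between hq
  have h0 : 0 ≤ r := (norm_nonneg q).trans hqr.le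
  have hr' := sq_lt_one_sub_two_mul h0 hr
  have hr1 : r < 1 := by nlinarith
  have h1 : 1 - q ≠ 0 := one_sub_ne_zero_of_norm_lt_one (hqr.trans hr1)
  have h2 {z : ℂ} (hz : ‖z‖ < r) : 1 - 2 * z ≠ 0 :=
    norm_pos_iff.1 (((sq_nonneg r).trans_lt hr').trans_le (one_sub_two_mul_le_norm hz.le))
  have hden {z : ℂ} (hz : ‖z‖ < r) (n : ℕ) : 1 - z - z ^ (n + 2) ≠ 0 :=
    norm_pos_iff.1 ((by linarith : 0 < 1 - r - r ^ 2).trans_le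
      (le_norm_one_sub_sub_pow hz.le hr1.le n))
  obtain ⟨b, hb, hle⟩ := exists_summable_norm_PAterm_succ_le h0 hr
  have hsum : DifferentiableOn ℂ (fun z => ∑' n, PAterm z (n + 1)) (Metric.ball 0 r) := by
    refine differentiableOn_tsum_of_summable_norm hb (fun n z hz => ?_) Metric.isOpen_ball
      fun n z hz => hle n z (mem_ball_zero_iff.1 hz).le
    rw [mem_ball_zero_iff] at hz
    exact (differentiableAt_PAterm_succ (h2 hz) (hden hz) n).differentiableWithinAt
  have hsum_at := hsum.differentiableAt (Metric.isOpen_ball.mem_nhds (mem_ball_zero_iff.2 hqr))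
  unfold PAseries
  refine .add (.mul (.div (by fun_prop) (by fun_prop) (pow_ne_zero _ (h2 hqr))) hsum_at) ?_
  exact .div (by fun_prop) (by fun_prop) (mul_ne_zero (pow_ne_zero _ (h2 hqr)) h1)

end Disc

/-- For `|q| < √2 - 1`, both series converge absolutely, the explicit series for `PA(q)`
agrees with the q-hypergeometric representation, and the common value is analytic on the
disc `|q| < √2 - 1`. -/
theorem PA_q_hypergeometric_representation :
    (∀ q : ℂ, ‖q‖ < Real.sqrt 2 - 1 →
      Summable (fun m : ℕ => ‖PAterm q (m + 1)‖) ∧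
      Summable (fun n : ℕ => ‖qHypTerm q (n + 1)‖) ∧
      PAseries q =
        CF q + AF q * (qPI (vF q) q / qPI (q * uF q) q) *
          ∑' n : ℕ, qHypTerm q (n + 1)) ∧
    AnalyticOnNhd ℂ PAseries {q : ℂ | ‖q‖ < Real.sqrt 2 - 1} := by
  refine ⟨fun q hq => ?_, ?_⟩
  · have h0 := norm_nonneg q
    have hr := sq_lt_one_sub_two_mul h0 hq
    have hq1 : ‖q‖ < 1 := by nlinarith
    have hu := one_sub_uF_mul_pow_ne_zero (by linarith : ‖q‖ + ‖q‖ ^ 2 < 1)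
    have hv := one_sub_vF_mul_pow_ne_zero hq1 (by nlinarith : ‖q‖ ^ 3 < (1 - ‖q‖) ^ 2)
    have hPA := summable_norm_PAterm_succ hq
    refine ⟨hPA, ?_, PAseries_eq hq1 hu hv⟩
    simp only [qHypTerm_succ hq1 hu hv, norm_mul _ (PAterm q _)]
    exact hPA.mul_left _
  · have hopen : IsOpen {q : ℂ | ‖q‖ < √2 - 1} := isOpen_lt continuous_norm continuous_const
    exact DifferentiableOn.analyticOnNhd
      (fun q hq => (differentiableAt_PAseries hq).differentiableWithinAt) hopen
end
end

section
/- In the punctured disc { q ∈ ℂ : |q| < 55/100 } \ {1/2}, the function PA(q) is meromorphic, and its poles there are exactly simple poles at the points z̄_k for k ≥ 2, where z̄_k is the unique root in (0,1) of 1 - 2x + x^{k+2} = 0. -/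
open Complex Filter Asymptotics Topology

noncomputable section

/-- the punctured disc `{q : |q| < 55/100} \ {1/2}` -/
def puncDisc : Set ℂ := {q : ℂ | ‖q‖ < 55 / 100 ∧ q ≠ (1 / 2 : ℂ)}

/-!
The terms of the series for `PA` form a `q`-hypergeometric sequence, so its generating function
`F z = ∑ PAterm q (m + 1) * z ^ m` satisfies a first order `q`-difference equation. Sampling it
along `z = q ^ j` gives a backward recurrence
`X j = -q ^ 2 + R j * X (j + 1)`, where `X j = (1 - q) * (1 - 2q + q ^ (j + 2)) * F (q ^ j)`.
Its only bounded solution is `-q ^ 2` times the nested series `1 + R j * (1 + R (j + 1) * ⋯)`.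
Since `R j → q ^ 2 / (1 - q)`, this nested series converges as long as `|q| ^ 2 + |q| < 1`, away
from the zeros of the denominators `1 - 2q + q ^ (j + 3)` of the `R j`; that continues `PA`.

In that disc `1 - 2q + q ^ (n + 2)` has no zero for `n < 2` and only the simple zero `z̄_n` for
`n ≥ 2`. At `q = z̄_k` the single factor `R (k - 1)` has a pole, and the simple pole survives: the
preceding `R j` do not vanish there, and the remaining nested series from index `k` on becomes the
sum in the `q`-binomial theorem, hence is nonzero.
-/

section NestedSeries

variable {R : Type*} [NormedCommRing R] {r X : ℕ → R} {c : R} {ρ : ℝ}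

/-- The nested series `1 + r j * (1 + r (j + 1) * (1 + r (j + 2) * ⋯))`, expanded into the sum of
its partial products. It solves the backward recurrence `X j = 1 + r j * X (j + 1)`. -/
def nestedSeries (r : ℕ → R) (j : ℕ) : R := ∑' N : ℕ, ∏ l ∈ Finset.range N, r (j + l)

theorem prod_range_succ_shift (r : ℕ → R) (j N : ℕ) :
    ∏ l ∈ Finset.range (N + 1), r (j + l) = r j * ∏ l ∈ Finset.range N, r (j + 1 + l) := by
  simp only [Finset.prod_range_succ', add_zero, mul_comm (r j), add_assoc, add_comm 1]

theorem eq_sum_add_prod_mul_of_recurrence (hX : ∀ j, X j = c + r j * X (j + 1)) (j N : ℕ) :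
    X j = c * ∑ M ∈ Finset.range N, ∏ l ∈ Finset.range M, r (j + l) +
      (∏ l ∈ Finset.range N, r (j + l)) * X (j + N) := by
  induction N with
  | zero => simp
  | succ N ih =>
    rw [ih, Finset.sum_range_succ, Finset.prod_range_succ, hX (j + N), add_assoc j N 1]
    ring

theorem summable_prod_of_norm_eventually_le [CompleteSpace R] (hρ : ρ < 1)
    (hr : ∀ᶠ n in atTop, ‖r n‖ ≤ ρ) (j : ℕ) :
    Summable fun N ↦ ∏ l ∈ Finset.range N, r (j + l) := by
  refine summable_of_ratio_norm_eventually_le hρ ?_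
  filter_upwards [(tendsto_add_atTop_nat j).eventually hr] with N hN
  rw [Finset.prod_range_succ, mul_comm, add_comm j N]
  exact (norm_mul_le _ _).trans (mul_le_mul_of_nonneg_right hN (norm_nonneg _))

theorem nestedSeries_eq_one_add_mul [CompleteSpace R] (hρ : ρ < 1)
    (hr : ∀ᶠ n in atTop, ‖r n‖ ≤ ρ) (j : ℕ) :
    nestedSeries r j = 1 + r j * nestedSeries r (j + 1) := by
  have hs := summable_prod_of_norm_eventually_le hρ hr
  rw [nestedSeries, (hs j).tsum_eq_zero_add, Finset.prod_range_zero]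
  simp only [prod_range_succ_shift]
  rw [(hs (j + 1)).tsum_mul_left, nestedSeries]

theorem eq_mul_nestedSeries_of_recurrence [CompleteSpace R] (hρ : ρ < 1)
    (hr : ∀ᶠ n in atTop, ‖r n‖ ≤ ρ) (hX : ∀ j, X j = c + r j * X (j + 1))
    (hbdd : IsBoundedUnder (· ≤ ·) atTop fun n ↦ ‖X n‖) (j : ℕ) :
    X j = c * nestedSeries r j := by
  have hs := summable_prod_of_norm_eventually_le hρ hr j
  have hremainder : Tendsto (fun N ↦ (∏ l ∈ Finset.range N, r (j + l)) * X (j + N)) atTop (𝓝 0) :=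
    hs.tendsto_atTop_zero.zero_mul_isBoundedUnder_le <| by
      simpa only [Function.comp_def, add_comm] using!
        (tendsto_add_atTop_nat j).isBoundedUnder_comp hbdd
  have hlim := (hs.tendsto_sum_tsum_nat.const_mul c).add hremainder
  simp only [← eq_sum_add_prod_mul_of_recurrence hX j, add_zero] at hlim
  exact tendsto_nhds_unique tendsto_const_nhds hlim

variable {r : ℕ → ℂ → ℂ} {q : ℂ}

theorem differentiableOn_nestedSeries {U : Set ℂ} {n : ℕ} (hU : IsOpen U) (hρ : ρ < 1)
    (hd : ∀ m ≥ n, DifferentiableOn ℂ (r m) U) (hr : ∀ m ≥ n, ∀ z ∈ U, ‖r m z‖ ≤ ρ) :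
    DifferentiableOn ℂ (fun z ↦ nestedSeries (r · z) n) U := by
  obtain rfl | ⟨z₀, hz₀⟩ := U.eq_empty_or_nonempty
  · exact differentiableOn_empty
  have hρ0 : 0 ≤ ρ := (norm_nonneg _).trans (hr n le_rfl z₀ hz₀)
  refine differentiableOn_tsum_of_summable_norm (summable_geometric_of_lt_one hρ0 hρ)
    (fun N ↦ DifferentiableOn.fun_finsetProd fun l _ ↦ hd _ (Nat.le_add_right n l)) hU
    fun N z hz ↦ ?_
  calc ‖∏ l ∈ Finset.range N, r (n + l) z‖ = ∏ l ∈ Finset.range N, ‖r (n + l) z‖ := norm_prod ..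
    _ ≤ ∏ _l ∈ Finset.range N, ρ :=
      Finset.prod_le_prod (fun _ _ ↦ norm_nonneg _) fun l _ ↦ hr _ (Nat.le_add_right n l) z hz
    _ = ρ ^ N := by simp

theorem analyticAt_nestedSeries (hρ : ρ < 1)
    (hr : ∀ᶠ p in atTop ×ˢ 𝓝 q, ‖r p.1 p.2‖ ≤ ρ ∧ DifferentiableAt ℂ (r p.1) p.2)
    {j : ℕ} (hj : ∀ n ≥ j, AnalyticAt ℂ (r n) q) :
    AnalyticAt ℂ (fun z ↦ nestedSeries (r · z) j) q := by
  obtain ⟨P, hP, V, hV, hPV⟩ := eventually_prod_iff.mp hr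
  obtain ⟨n, hn⟩ := eventually_atTop.mp hP
  obtain ⟨U, hUV, hU, hqU⟩ := mem_nhds_iff.mp hV
  have htail : AnalyticAt ℂ (fun z ↦ nestedSeries (r · z) (j + n)) q := by
    refine (differentiableOn_nestedSeries hU hρ (fun m hm z hz ↦ ?_)
      fun m hm z hz ↦ ?_).analyticAt (hU.mem_nhds hqU)
    · exact (hPV (hn m (by omega)) (hUV hz)).2.differentiableWithinAt
    · exact (hPV (hn m (by omega)) (hUV hz)).1
  have hprod (N : ℕ) : AnalyticAt ℂ (fun z ↦ ∏ l ∈ Finset.range N, r (j + l) z) q :=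
    Finset.analyticAt_fun_prod _ fun l _ ↦ hj _ (Nat.le_add_right j l)
  have hsum : AnalyticAt ℂ (fun z ↦ ∑ M ∈ Finset.range n, ∏ l ∈ Finset.range M, r (j + l) z) q :=
    Finset.analyticAt_fun_sum _ fun M _ ↦ hprod M
  refine (hsum.add ((hprod n).mul htail)).congr ?_
  filter_upwards [hU.mem_nhds hqU] with z hz
  have hrz : ∀ᶠ m in atTop, ‖r m z‖ ≤ ρ :=
    eventually_atTop.mpr ⟨n, fun m hm ↦ (hPV (hn m hm) (hUV hz)).1⟩
  simpa using! (eq_sum_add_prod_mul_of_recurrence (nestedSeries_eq_one_add_mul hρ hrz) j n).symm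

end NestedSeries

section QHypergeometric

variable {𝕜 : Type*} [NormedField 𝕜] {q α β γ δ y c z : 𝕜} {A : ℕ → 𝕜}

/-- The sum of the power series with coefficients `A`. -/
def genFun (A : ℕ → 𝕜) (z : 𝕜) : 𝕜 := ∑' m : ℕ, A m * z ^ m

/-- `A` is a `q`-hypergeometric sequence with linear factors: consecutive terms have ratio
`A (m + 1) / A m = (γ - δ * q ^ m) / (α - β * q ^ (m + 1))`. The recurrence is multiplied out. -/
def IsQHypergeometric (q α β γ δ : 𝕜) (A : ℕ → 𝕜) : Prop :=
  ∀ m, A (m + 1) * (α - β * q ^ (m + 1)) = A m * (γ - δ * q ^ m)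

theorem IsQHypergeometric.summable_norm (hA : IsQHypergeometric q α β γ δ A) (hq : ‖q‖ < 1)
    (hγα : ‖γ‖ < ‖α‖) : Summable fun m ↦ ‖A m‖ := by
  have hα : 0 < ‖α‖ := (norm_nonneg γ).trans_lt hγα
  obtain ⟨ρ, hρ, hρ1⟩ := exists_between ((div_lt_one hα).mpr hγα)
  have hpow : Tendsto (q ^ · : ℕ → 𝕜) atTop (𝓝 0) := tendsto_pow_atTop_nhds_zero_of_norm_lt_one hq
  have hnum : Tendsto (fun m ↦ ‖γ - δ * q ^ m‖) atTop (𝓝 ‖γ‖) := by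
    simpa using (tendsto_const_nhds.sub (hpow.const_mul δ)).norm
  have hden : Tendsto (fun m ↦ ‖α - β * q ^ (m + 1)‖) atTop (𝓝 ‖α‖) := by
    simpa using (tendsto_const_nhds.sub
      (((tendsto_add_atTop_iff_nat 1).mpr hpow).const_mul β)).norm
  refine summable_of_ratio_norm_eventually_le hρ1 ?_
  filter_upwards [hnum.eventually_lt (hden.const_mul ρ) ((div_lt_iff₀ hα).mp hρ),
    hden.eventually_const_lt hα] with m hm hpos
  simp only [norm_norm]
  refine le_of_mul_le_mul_right ?_ hpos
  calc ‖A (m + 1)‖ * ‖α - β * q ^ (m + 1)‖ = ‖A m‖ * ‖γ - δ * q ^ m‖ := by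
        rw [← norm_mul, hA m, norm_mul]
    _ ≤ ‖A m‖ * (ρ * ‖α - β * q ^ (m + 1)‖) := by gcongr
    _ = ρ * ‖A m‖ * ‖α - β * q ^ (m + 1)‖ := by ring

theorem norm_mul_pow_le_of_norm_le_one (A : ℕ → 𝕜) (hz : ‖z‖ ≤ 1) (m : ℕ) :
    ‖A m * z ^ m‖ ≤ ‖A m‖ := by
  rw [norm_mul, norm_pow]
  exact mul_le_of_le_one_right (norm_nonneg _) (pow_le_one₀ (norm_nonneg _) hz)

variable [CompleteSpace 𝕜]

theorem hasSum_genFun (hs : Summable fun m ↦ ‖A m‖) (hz : ‖z‖ ≤ 1) :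
    HasSum (fun m ↦ A m * z ^ m) (genFun A z) :=
  (Summable.of_norm_bounded hs (norm_mul_pow_le_of_norm_le_one A hz)).hasSum

theorem tendsto_genFun_pow (hs : Summable fun m ↦ ‖A m‖) (hq : ‖q‖ < 1) :
    Tendsto (fun n ↦ genFun A (q ^ n)) atTop (𝓝 (A 0)) := by
  have hcont : ContinuousOn (genFun A) (Metric.closedBall 0 1) :=
    continuousOn_tsum (fun m ↦ by fun_prop) hs fun m z hz ↦
      norm_mul_pow_le_of_norm_le_one A (mem_closedBall_zero_iff.mp hz) m
  have hzero : genFun A 0 = A 0 := by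
    rw [genFun, tsum_eq_single 0 fun m hm ↦ by simp [hm], pow_zero, mul_one]
  rw [← hzero]
  exact (hcont.continuousAt (Metric.closedBall_mem_nhds 0 one_pos)).tendsto.comp
    (tendsto_pow_atTop_nhds_zero_of_norm_lt_one hq)

theorem IsQHypergeometric.genFun_qDifference (hA : IsQHypergeometric q α β γ δ A)
    (hs : Summable fun m ↦ ‖A m‖) (hq : ‖q‖ ≤ 1) (hz : ‖z‖ ≤ 1) :
    α * (genFun A z - A 0) - β * (genFun A (q * z) - A 0) =
      z * (γ * genFun A z - δ * genFun A (q * z)) := by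
  have hqz : ‖q * z‖ ≤ 1 := by
    rw [norm_mul]
    exact mul_le_one₀ hq (norm_nonneg z) hz
  have htail {w : 𝕜} (hw : ‖w‖ ≤ 1) :
      HasSum (fun m ↦ A (m + 1) * w ^ (m + 1)) (genFun A w - A 0) := by
    simpa using (hasSum_nat_add_iff' (f := fun m ↦ A m * w ^ m) 1).mpr (hasSum_genFun hs hw)
  have hleft := ((htail hz).mul_left α).sub ((htail hqz).mul_left β)
  have hright := (((hasSum_genFun hs hz).mul_left γ).sub
    ((hasSum_genFun hs hqz).mul_left δ)).mul_left z
  refine hleft.unique (hright.congr_fun fun m ↦ ?_)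
  linear_combination z ^ (m + 1) * hA m

/- The series is the left side of the `q`-binomial theorem, whose value is
`(c; q)_∞ / (y; q)_∞`. Only the functional equation `(1 - y z) F(z) = (1 - c z) F(q z)` is needed:
a zero at `z = 1` would propagate along `q ^ n`, where `F → 1`. -/
theorem nestedSeries_qBinomial_ne_zero (hq : ‖q‖ < 1) (hy : ‖y‖ < 1) (hc : ‖c‖ < 1) :
    nestedSeries (fun l ↦ (y - c * q ^ l) / (1 - q ^ (l + 1))) 0 ≠ 0 := by
  have hone_sub {w : 𝕜} (hw : ‖w‖ < 1) : 1 - w ≠ 0 := (isUnit_one_sub_of_norm_lt_one hw).ne_zero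
  have hpow (n : ℕ) : ‖q ^ n‖ ≤ 1 := by
    rw [norm_pow]
    exact pow_le_one₀ (norm_nonneg _) hq.le
  set A : ℕ → 𝕜 := fun N ↦ ∏ l ∈ Finset.range N, (y - c * q ^ l) / (1 - q ^ (l + 1)) with hAdef
  have hA : IsQHypergeometric q 1 1 y c A := fun m ↦ by
    have : 1 - q ^ (m + 1) ≠ 0 :=
      hone_sub ((norm_pow q _).trans_lt (pow_lt_one₀ (norm_nonneg q) hq m.succ_ne_zero))
    simp only [hAdef, Finset.prod_range_succ]
    field_simp
  have hs := hA.summable_norm hq (by simpa using hy)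
  have hstep (n : ℕ) (h : genFun A (q ^ n) = 0) : genFun A (q ^ (n + 1)) = 0 := by
    have hfun : (1 - c * q ^ n) * genFun A (q ^ (n + 1)) = 0 := by
      rw [pow_succ']
      linear_combination (1 - q ^ n * y) * h - hA.genFun_qDifference hs hq.le (hpow n)
    refine (mul_eq_zero.mp hfun).resolve_left (hone_sub ?_)
    rw [norm_mul]
    exact mul_lt_one_of_nonneg_of_lt_one_left (norm_nonneg c) hc (hpow n)
  intro hzero
  have hvanish (n : ℕ) : genFun A (q ^ n) = 0 := by
    induction n with
    | zero => simpa [genFun, nestedSeries, hAdef] using hzero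
    | succ n ih => exact hstep n ih
  have hlim := tendsto_genFun_pow hs hq
  simp only [hvanish] at hlim
  exact one_ne_zero (tendsto_nhds_unique hlim tendsto_const_nhds)

end QHypergeometric

section Roots

/-- The polynomial `1 - 2x + x ^ (n + 2)`, whose root in `(0, 1)` is `z̄_n`. -/
def zbarPoly (n : ℕ) (q : ℂ) : ℂ := 1 - 2 * q + q ^ (n + 2)

/-- The real number `x` is the root `z̄_k` of `zbarPoly k` in `(0, 1)`. -/
def IsZbar (k : ℕ) (x : ℝ) : Prop := x ∈ Set.Ioo (0 : ℝ) 1 ∧ 1 - 2 * x + x ^ (k + 2) = 0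

/-- The disc of radius `φ⁻¹`, with `φ` the golden ratio, punctured at `1 / 2`. Its radius is the
positive solution of `r ^ 2 = 1 - r`, so that `‖q ^ 2 / (1 - q)‖ < 1` inside. -/
def puncGoldenDisc : Set ℂ := {q | ‖q‖ ^ 2 + ‖q‖ < 1 ∧ q ≠ 1 / 2}

variable {q z w : ℂ} {n k : ℕ} {x : ℝ}

theorem isOpen_puncGoldenDisc : IsOpen puncGoldenDisc := by
  unfold puncGoldenDisc
  exact (isOpen_lt ((continuous_norm.pow 2).add continuous_norm) continuous_const).inter isOpen_ne

theorem puncDisc_subset_puncGoldenDisc : puncDisc ⊆ puncGoldenDisc := fun q hq ↦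
  ⟨by nlinarith [hq.1, norm_nonneg q], hq.2⟩

theorem norm_lt_five_eighths (hq : q ∈ puncGoldenDisc) : ‖q‖ < 5 / 8 := by
  nlinarith [hq.1, norm_nonneg q]

theorem one_sub_ne_zero_of_mem (hq : q ∈ puncGoldenDisc) : 1 - q ≠ 0 :=
  (isUnit_one_sub_of_norm_lt_one ((norm_lt_five_eighths hq).trans (by norm_num))).ne_zero

theorem one_sub_two_mul_ne_zero_of_mem (hq : q ∈ puncGoldenDisc) : 1 - 2 * q ≠ 0 := fun h ↦
  hq.2 (by linear_combination -h / 2)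

theorem analyticAt_zbarPoly (n : ℕ) (q : ℂ) : AnalyticAt ℂ (zbarPoly n) q := by
  unfold zbarPoly
  fun_prop

theorem zbarPoly_ne_zero_of_lt_two (hq : q ∈ puncGoldenDisc) (hn : n < 2) : zbarPoly n q ≠ 0 := by
  have hone := one_sub_ne_zero_of_mem hq
  interval_cases n
  · rw [show zbarPoly 0 q = (1 - q) ^ 2 by rw [zbarPoly]; ring]
    exact pow_ne_zero 2 hone
  · have hnorm : ‖q ^ 2 + q‖ < 1 := (norm_add_le _ _).trans_lt (by simpa using hq.1)
    rw [show zbarPoly 1 q = (1 - q) * (1 - (q ^ 2 + q)) by rw [zbarPoly]; ring]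
    exact mul_ne_zero hone (isUnit_one_sub_of_norm_lt_one hnorm).ne_zero

theorem add_two_mul_five_eighths_pow_lt_two (hn : 2 ≤ n) :
    ((n : ℝ) + 2) * (5 / 8) ^ (n + 1) < 2 := by
  induction n, hn using Nat.le_induction with
  | base => norm_num
  | succ n _ ih =>
    have hpow : (0 : ℝ) < (5 / 8) ^ (n + 1) := by positivity
    push_cast
    rw [pow_succ]
    nlinarith

theorem norm_deriv_pow_le (hz : ‖z‖ ≤ 5 / 8) (n : ℕ) :
    ‖((n + 2 : ℕ) : ℂ) * z ^ (n + 1)‖ ≤ ((n : ℝ) + 2) * (5 / 8) ^ (n + 1) := by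
  rw [norm_mul, norm_pow, Complex.norm_natCast]
  push_cast
  gcongr

theorem deriv_zbarPoly_ne_zero (hn : 2 ≤ n) (hz : ‖z‖ ≤ 5 / 8) : deriv (zbarPoly n) z ≠ 0 := by
  have hderiv : HasDerivAt (zbarPoly n) (((n + 2 : ℕ) : ℂ) * z ^ (n + 1) - 2) z := by
    simpa [add_comm, sub_eq_add_neg] using!
      (((hasDerivAt_id z).const_mul 2).const_sub 1).add (hasDerivAt_pow (n + 2) z)
  rw [hderiv.deriv, sub_ne_zero]
  intro h
  have hle := norm_deriv_pow_le hz n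
  rw [h, Complex.norm_ofNat] at hle
  exact hle.not_gt (add_two_mul_five_eighths_pow_lt_two hn)

theorem eq_of_zbarPoly_eq_zero (hn : 2 ≤ n) (hz : ‖z‖ < 5 / 8) (hw : ‖w‖ < 5 / 8)
    (hz0 : zbarPoly n z = 0) (hw0 : zbarPoly n w = 0) : z = w := by
  have hlip : ‖z ^ (n + 2) - w ^ (n + 2)‖ ≤ ((n : ℝ) + 2) * (5 / 8) ^ (n + 1) * ‖z - w‖ := by
    refine (convex_ball (0 : ℂ) (5 / 8)).norm_image_sub_le_of_norm_hasDerivWithin_le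
      (fun v _ ↦ (hasDerivAt_pow (n + 2) v).hasDerivWithinAt) (fun v hv ↦ ?_)
      (mem_ball_zero_iff.mpr hw) (mem_ball_zero_iff.mpr hz)
    exact norm_deriv_pow_le (mem_ball_zero_iff.mp hv).le n
  have hdiff : z ^ (n + 2) - w ^ (n + 2) = 2 * (z - w) := by
    unfold zbarPoly at hz0 hw0
    linear_combination hz0 - hw0
  rw [hdiff, norm_mul, Complex.norm_ofNat] at hlip
  by_contra hne
  have hpos : 0 < ‖z - w‖ := norm_sub_pos_iff.mpr hne
  exact hlip.not_gt (mul_lt_mul_of_pos_right (add_two_mul_five_eighths_pow_lt_two hn) hpos)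

namespace IsZbar

theorem half_lt (h : IsZbar k x) : 1 / 2 < x := by
  have hpow : 0 < x ^ (k + 2) := pow_pos h.1.1 _
  linarith [h.2]

theorem add_sq_add_cube_le_one (h : IsZbar k x) (hk : 2 ≤ k) : x + x ^ 2 + x ^ 3 ≤ 1 := by
  obtain ⟨⟨h0, h1⟩, hroot⟩ := h
  have hpow : x ^ (k + 2) ≤ x ^ 4 := pow_le_pow_of_le_one h0.le h1.le (by omega)
  have hfactor : 0 ≤ (1 - x) * (1 - (x + x ^ 2 + x ^ 3)) := by linarith
  linarith [nonneg_of_mul_nonneg_right hfactor (sub_pos.mpr h1)]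

theorem mem_puncGoldenDisc (h : IsZbar k x) (hk : 2 ≤ k) : (x : ℂ) ∈ puncGoldenDisc := by
  have hcube : 0 < x ^ 3 := pow_pos h.1.1 3
  refine ⟨?_, fun hx ↦ h.half_lt.ne' ?_⟩
  · rw [Complex.norm_of_nonneg h.1.1.le]
    linarith [h.add_sq_add_cube_le_one hk]
  · exact Complex.ofReal_injective (by rw [hx]; push_cast; rfl)

theorem zbarPoly_ofReal (h : IsZbar k x) (n : ℕ) :
    zbarPoly n x = (x ^ (n + 2) - x ^ (k + 2) : ℝ) := by
  rw [zbarPoly, show x ^ (n + 2) - x ^ (k + 2) = 1 - 2 * x + x ^ (n + 2) by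
    linear_combination -h.2]
  push_cast
  rfl

theorem zbarPoly_eq_zero_iff (h : IsZbar k x) : zbarPoly n x = 0 ↔ n = k := by
  rw [h.zbarPoly_ofReal, Complex.ofReal_eq_zero, sub_eq_zero,
    (pow_right_injective₀ h.1.1 h.1.2.ne).eq_iff, Nat.add_right_cancel_iff]

theorem meromorphicOrderAt_zbarPoly (h : IsZbar k x) (hk : 2 ≤ k) :
    meromorphicOrderAt (zbarPoly k) x = 1 := by
  have hder := deriv_zbarPoly_ne_zero hk (norm_lt_five_eighths (h.mem_puncGoldenDisc hk)).le
  have hzero : zbarPoly k x = 0 := h.zbarPoly_eq_zero_iff.mpr rfl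
  have han := analyticAt_zbarPoly k (x : ℂ)
  rw [han.meromorphicOrderAt_eq, han.analyticOrderAt_eq_one_of_zero_deriv_ne_zero hzero hder]
  rfl

end IsZbar

theorem exists_eq_zbar_of_zbarPoly_eq_zero {zbar : ℕ → ℝ}
    (hzbar : ∀ k : ℕ, 2 ≤ k → IsZbar k (zbar k)) (hq : q ∈ puncGoldenDisc)
    (h : zbarPoly n q = 0) : ∃ k : ℕ, 2 ≤ k ∧ q = (zbar k : ℂ) := by
  have hn : 2 ≤ n := not_lt.mp fun hlt ↦ zbarPoly_ne_zero_of_lt_two hq hlt h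
  exact ⟨n, hn, eq_of_zbarPoly_eq_zero hn (norm_lt_five_eighths hq)
    (norm_lt_five_eighths ((hzbar n hn).mem_puncGoldenDisc hn)) h
    ((hzbar n hn).zbarPoly_eq_zero_iff.mpr rfl)⟩

end Roots

section KernelSeries

/-- The numerator of `kernelRatio`. -/
def kernelNum (n : ℕ) (q : ℂ) : ℂ := q ^ 2 * (1 - 2 * q) + (1 - q + q ^ 2) * q ^ (n + 3)

/-- The coefficients of the backward recurrence `X n = -q ^ 2 + kernelRatio n q * X (n + 1)` solved
by `X n = (1 - q) * zbarPoly n q * F (q ^ n)`, where `F z = ∑ PAterm q (m + 1) * z ^ m`. -/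
def kernelRatio (n : ℕ) (q : ℂ) : ℂ := kernelNum n q / ((1 - q) * zbarPoly (n + 1) q)

/-- The nested series of `kernelRatio`: its value at `j = 0` carries the poles of `PA`. -/
def kernelSeries (j : ℕ) (q : ℂ) : ℂ := nestedSeries (kernelRatio · q) j

variable {q : ℂ} {j k n : ℕ} {x : ℝ}

theorem analyticAt_kernelNum (n : ℕ) (q : ℂ) : AnalyticAt ℂ (kernelNum n) q := by
  unfold kernelNum
  fun_prop

theorem analyticAt_kernelRatio (hq : q ∈ puncGoldenDisc) (h : zbarPoly (n + 1) q ≠ 0) :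
    AnalyticAt ℂ (kernelRatio n) q :=
  (analyticAt_kernelNum n q).div ((analyticAt_const.sub analyticAt_id).mul
    (analyticAt_zbarPoly _ q)) (mul_ne_zero (one_sub_ne_zero_of_mem hq) h)

theorem tendsto_snd_pow_fst_atTop_prod_nhds {𝕜 : Type*} [NormedDivisionRing 𝕜] {q : 𝕜}
    (hq : ‖q‖ < 1) : Tendsto (fun p : ℕ × 𝕜 ↦ p.2 ^ p.1) (atTop ×ˢ 𝓝 q) (𝓝 0) := by
  obtain ⟨s, hqs, hs⟩ := exists_between hq
  have hnear : ∀ᶠ p : ℕ × 𝕜 in atTop ×ˢ 𝓝 q, ‖p.2‖ < s :=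
    tendsto_snd.eventually (continuous_norm.continuousAt.eventually_lt_const hqs)
  refine squeeze_zero_norm' (hnear.mono fun p hp ↦ ?_)
    ((tendsto_pow_atTop_nhds_zero_of_lt_one ((norm_nonneg q).trans hqs.le) hs).comp tendsto_fst)
  rw [norm_pow]
  exact pow_le_pow_left₀ (norm_nonneg _) hp.le _

theorem tendsto_zbarPoly_atTop_prod_nhds (hq : ‖q‖ < 1) :
    Tendsto (fun p : ℕ × ℂ ↦ zbarPoly p.1 p.2) (atTop ×ˢ 𝓝 q) (𝓝 (1 - 2 * q)) := by
  have hsnd : Tendsto (Prod.snd : ℕ × ℂ → ℂ) (atTop ×ˢ 𝓝 q) (𝓝 q) := tendsto_snd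
  simpa [zbarPoly, pow_add] using (tendsto_const_nhds.sub (hsnd.const_mul 2)).add
    ((tendsto_snd_pow_fst_atTop_prod_nhds hq).mul (hsnd.pow 2))

theorem tendsto_zbarPoly_succ_atTop_prod_nhds (hq : ‖q‖ < 1) :
    Tendsto (fun p : ℕ × ℂ ↦ zbarPoly (p.1 + 1) p.2) (atTop ×ˢ 𝓝 q) (𝓝 (1 - 2 * q)) :=
  (tendsto_zbarPoly_atTop_prod_nhds hq).comp
    (((tendsto_add_atTop_nat 1).comp tendsto_fst).prodMk tendsto_snd)

theorem tendsto_kernelRatio_atTop_prod_nhds (hq : q ∈ puncGoldenDisc) :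
    Tendsto (fun p : ℕ × ℂ ↦ kernelRatio p.1 p.2) (atTop ×ˢ 𝓝 q) (𝓝 (q ^ 2 / (1 - q))) := by
  have hq1 : ‖q‖ < 1 := (norm_lt_five_eighths hq).trans (by norm_num)
  have hone := one_sub_ne_zero_of_mem hq
  have htwo := one_sub_two_mul_ne_zero_of_mem hq
  have hsnd : Tendsto (Prod.snd : ℕ × ℂ → ℂ) (atTop ×ˢ 𝓝 q) (𝓝 q) := tendsto_snd
  have hone_sub : Tendsto (fun p : ℕ × ℂ ↦ 1 - p.2) (atTop ×ˢ 𝓝 q) (𝓝 (1 - q)) :=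
    tendsto_const_nhds.sub hsnd
  have hnum : Tendsto (fun p : ℕ × ℂ ↦ kernelNum p.1 p.2) (atTop ×ˢ 𝓝 q)
      (𝓝 (q ^ 2 * (1 - 2 * q))) := by
    simpa [kernelNum, pow_add] using ((hsnd.pow 2).mul
      (tendsto_const_nhds.sub (hsnd.const_mul 2))).add ((hone_sub.add (hsnd.pow 2)).mul
      ((tendsto_snd_pow_fst_atTop_prod_nhds hq1).mul (hsnd.pow 3)))
  rw [← mul_div_mul_right (q ^ 2) (1 - q) htwo]
  exact hnum.div (hone_sub.mul (tendsto_zbarPoly_succ_atTop_prod_nhds hq1))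
    (mul_ne_zero hone htwo)

theorem norm_sq_div_one_sub_lt_one (hq : q ∈ puncGoldenDisc) : ‖q ^ 2 / (1 - q)‖ < 1 := by
  have hle := norm_sub_norm_le 1 q
  rw [norm_one] at hle
  rw [norm_div, norm_pow, div_lt_one (norm_pos_iff.mpr (one_sub_ne_zero_of_mem hq))]
  linarith [hq.1]

theorem exists_norm_kernelRatio_le (hq : q ∈ puncGoldenDisc) : ∃ ρ < (1 : ℝ),
    ∀ᶠ p in atTop ×ˢ 𝓝 q, ‖kernelRatio p.1 p.2‖ ≤ ρ ∧ DifferentiableAt ℂ (kernelRatio p.1) p.2 := by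
  have hq1 : ‖q‖ < 1 := (norm_lt_five_eighths hq).trans (by norm_num)
  obtain ⟨ρ, hlim, hρ⟩ := exists_between (norm_sq_div_one_sub_lt_one hq)
  refine ⟨ρ, hρ, ?_⟩
  filter_upwards [(tendsto_kernelRatio_atTop_prod_nhds hq).norm.eventually_lt_const hlim,
    (tendsto_zbarPoly_succ_atTop_prod_nhds hq1).eventually_ne (one_sub_two_mul_ne_zero_of_mem hq),
    tendsto_snd.eventually (isOpen_puncGoldenDisc.mem_nhds hq)] with p hle hne hmem
  exact ⟨hle.le, (analyticAt_kernelRatio hmem hne).differentiableAt⟩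

theorem exists_eventually_norm_kernelRatio_le (hq : q ∈ puncGoldenDisc) :
    ∃ ρ < (1 : ℝ), ∀ᶠ n in atTop, ‖kernelRatio n q‖ ≤ ρ := by
  obtain ⟨ρ, hρ, h⟩ := exists_norm_kernelRatio_le hq
  exact ⟨ρ, hρ, h.curry.mono fun n hn ↦ hn.self_of_nhds.1⟩

theorem kernelSeries_eq_one_add_mul (hq : q ∈ puncGoldenDisc) (j : ℕ) :
    kernelSeries j q = 1 + kernelRatio j q * kernelSeries (j + 1) q := by
  obtain ⟨ρ, hρ, h⟩ := exists_eventually_norm_kernelRatio_le hq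
  exact nestedSeries_eq_one_add_mul hρ h j

theorem analyticAt_kernelSeries (hq : q ∈ puncGoldenDisc) (h : ∀ n > j, zbarPoly n q ≠ 0) :
    AnalyticAt ℂ (kernelSeries j) q := by
  obtain ⟨ρ, hρ, hr⟩ := exists_norm_kernelRatio_le hq
  exact analyticAt_nestedSeries hρ hr fun n hn ↦ analyticAt_kernelRatio hq (h _ (by omega))

theorem meromorphicOrderAt_kernelSeries_of_succ (hq : q ∈ puncGoldenDisc)
    (h : meromorphicOrderAt (kernelRatio j * kernelSeries (j + 1)) q = -1) :
    meromorphicOrderAt (kernelSeries j) q = -1 := by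
  have hlt : meromorphicOrderAt (kernelRatio j * kernelSeries (j + 1)) q <
      meromorphicOrderAt (1 : ℂ → ℂ) q := by
    refine lt_of_lt_of_le ?_ (analyticAt_const (v := (1 : ℂ))).meromorphicOrderAt_nonneg
    rw [h]
    decide
  rw [← h, ← meromorphicOrderAt_add_eq_right_of_lt analyticAt_const.meromorphicAt hlt]
  refine meromorphicOrderAt_congr (eventually_nhdsWithin_of_eventually_nhds ?_)
  filter_upwards [isOpen_puncGoldenDisc.mem_nhds hq] with z hz
  exact kernelSeries_eq_one_add_mul hz j

namespace IsZbar

theorem kernelNum_ne_zero (h : IsZbar k x) (hn : n ≤ k) : kernelNum n x ≠ 0 := by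
  obtain ⟨⟨h0, h1⟩, hroot⟩ := h
  have hpow : x ^ (k + 2) ≤ x ^ (n + 2) := pow_le_pow_of_le_one h0.le h1.le (by omega)
  have hpos : 0 < x ^ (n + 2) := pow_pos h0 _
  have hsq : 0 < (1 - x) ^ 2 := pow_pos (sub_pos.mpr h1) 2
  have heq : x ^ 2 * (1 - 2 * x) + (1 - x + x ^ 2) * x ^ (n + 3) =
      x * ((1 - x) ^ 2 * x ^ (n + 2) + x * (x ^ (n + 2) - x ^ (k + 2))) := by
    linear_combination x ^ 2 * hroot
  have hne : x ^ 2 * (1 - 2 * x) + (1 - x + x ^ 2) * x ^ (n + 3) ≠ 0 := by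
    rw [heq]
    exact (mul_pos h0 (add_pos_of_pos_of_nonneg (mul_pos hsq hpos)
      (mul_nonneg h0.le (sub_nonneg.mpr hpow)))).ne'
  unfold kernelNum
  exact_mod_cast hne

/- At `q = z̄_k`, `1 - 2q = -q ^ (k + 2)` cancels from numerator and denominator. -/
theorem kernelRatio_add_eq (h : IsZbar k x) (l : ℕ) :
    kernelRatio (k + l) x = ((x : ℂ) ^ 2 / (1 - x) -
      x * (1 - x + x ^ 2) / (1 - x) * x ^ l) / (1 - x ^ (l + 1)) := by
  have hx : (x : ℂ) ≠ 0 := Complex.ofReal_ne_zero.mpr h.1.1.ne'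
  have hone : (1 - x : ℂ) ≠ 0 := by exact_mod_cast (sub_pos.mpr h.1.2).ne'
  have hden : (1 - x ^ (l + 1) : ℂ) ≠ 0 := by
    exact_mod_cast (sub_pos.mpr (pow_lt_one₀ h.1.1.le h.1.2 l.succ_ne_zero)).ne'
  have hroot : (1 - 2 * x : ℂ) = -x ^ (k + 2) := by
    exact_mod_cast eq_neg_of_add_eq_zero_left h.2
  have hzbar : zbarPoly (k + l + 1) x = -(x : ℂ) ^ (k + 2) * (1 - x ^ (l + 1)) := by
    rw [zbarPoly, hroot]
    ring
  have hnum : kernelNum (k + l) x =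
      -(x : ℂ) ^ (k + 2) * (x ^ 2 - x * (1 - x + x ^ 2) * x ^ l) := by
    rw [kernelNum, hroot]
    ring
  rw [kernelRatio, hzbar, hnum]
  field_simp

theorem kernelSeries_ne_zero (h : IsZbar k x) (hk : 2 ≤ k) : kernelSeries k x ≠ 0 := by
  have hx1 : 0 < 1 - x := sub_pos.mpr h.1.2
  have hx0 : 0 < x := h.1.1
  have hx : ‖(x : ℂ)‖ < 1 := by rw [Complex.norm_of_nonneg hx0.le]; exact h.1.2
  have hy : ‖(x : ℂ) ^ 2 / (1 - x)‖ < 1 := norm_sq_div_one_sub_lt_one (h.mem_puncGoldenDisc hk)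
  have hc : ‖(x : ℂ) * (1 - x + x ^ 2) / (1 - x)‖ < 1 := by
    have hcast : (x : ℂ) * (1 - x + x ^ 2) / (1 - x) = (x * (1 - x + x ^ 2) / (1 - x) : ℝ) := by
      push_cast
      rfl
    rw [hcast, Complex.norm_of_nonneg (by positivity), div_lt_one hx1]
    nlinarith [h.half_lt, h.add_sq_add_cube_le_one hk]
  have heq : kernelSeries k x = nestedSeries (fun l ↦ ((x : ℂ) ^ 2 / (1 - x) -
      x * (1 - x + x ^ 2) / (1 - x) * x ^ l) / (1 - x ^ (l + 1))) 0 := by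
    simp only [kernelSeries, nestedSeries, h.kernelRatio_add_eq, zero_add]
  rw [heq]
  exact nestedSeries_qBinomial_ne_zero hx hy hc

theorem meromorphicOrderAt_kernelRatio (h : IsZbar k x) (hk : 2 ≤ k) (hn : n + 1 = k) :
    meromorphicOrderAt (kernelRatio n) x = -1 := by
  have hmem := h.mem_puncGoldenDisc hk
  have hone := one_sub_ne_zero_of_mem hmem
  have hfactor : kernelRatio n = (fun z ↦ kernelNum n z / (1 - z)) * (zbarPoly k)⁻¹ := by
    ext z
    rw [kernelRatio, hn, div_mul_eq_div_div, div_eq_mul_inv, Pi.mul_apply, Pi.inv_apply]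
  have hunit : AnalyticAt ℂ (fun z ↦ kernelNum n z / (1 - z)) x :=
    (analyticAt_kernelNum n x).div (analyticAt_const.sub analyticAt_id) hone
  rw [hfactor, meromorphicOrderAt_mul_of_ne_zero hunit
      (div_ne_zero (h.kernelNum_ne_zero (by omega)) hone),
    meromorphicOrderAt_inv, h.meromorphicOrderAt_zbarPoly hk]

theorem meromorphicOrderAt_kernelSeries (h : IsZbar k x) (hk : 2 ≤ k) (hj : j < k) :
    meromorphicOrderAt (kernelSeries j) x = -1 := by
  have hmem := h.mem_puncGoldenDisc hk
  obtain ⟨i, hi⟩ := Nat.exists_eq_add_of_lt hj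
  induction i generalizing j with
  | zero =>
    have han : AnalyticAt ℂ (kernelSeries (j + 1)) x :=
      analyticAt_kernelSeries hmem fun n hn ↦ h.zbarPoly_eq_zero_iff.not.mpr (by omega)
    have hne : kernelSeries (j + 1) x ≠ 0 := by
      simpa [hi] using h.kernelSeries_ne_zero hk
    refine meromorphicOrderAt_kernelSeries_of_succ hmem ?_
    rw [mul_comm, meromorphicOrderAt_mul_of_ne_zero han hne]
    exact h.meromorphicOrderAt_kernelRatio hk hi.symm
  | succ i ih =>
    have hden : zbarPoly (j + 1) x ≠ 0 := h.zbarPoly_eq_zero_iff.not.mpr (by omega)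
    have hne : kernelRatio j x ≠ 0 := div_ne_zero (h.kernelNum_ne_zero hj.le)
      (mul_ne_zero (one_sub_ne_zero_of_mem hmem) hden)
    refine meromorphicOrderAt_kernelSeries_of_succ hmem ?_
    rw [meromorphicOrderAt_mul_of_ne_zero (analyticAt_kernelRatio hmem hden) hne]
    exact ih (by omega) (by omega)

end IsZbar

end KernelSeries

section PA

variable {q : ℂ} {k n : ℕ} {x : ℝ}

/- The condition `‖q‖ ^ 2 + 2 * ‖q‖ < 1`, that is `‖q‖ < √2 - 1`, makes the limit
`-q ^ 2 / (1 - 2 * q)` of the ratio of consecutive terms `PAterm q m` smaller than `1` in norm. -/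

theorem norm_lt_half (hq : ‖q‖ ^ 2 + 2 * ‖q‖ < 1) : ‖q‖ < 1 / 2 := by
  linarith [sq_nonneg ‖q‖]

theorem mem_puncGoldenDisc_of_norm_lt (hq : ‖q‖ ^ 2 + 2 * ‖q‖ < 1) :
    q ∈ puncGoldenDisc := by
  refine ⟨by linarith [norm_nonneg q], ?_⟩
  rintro rfl
  norm_num at hq

theorem norm_pow_add_two_le (hq : ‖q‖ ≤ 1) (n : ℕ) : ‖q ^ (n + 2)‖ ≤ ‖q‖ ^ 2 := by
  rw [norm_pow]
  exact pow_le_pow_of_le_one (norm_nonneg q) hq (by omega)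

theorem one_sub_sub_pow_ne_zero (hq : ‖q‖ ^ 2 + ‖q‖ < 1) (n : ℕ) : 1 - q - q ^ (n + 2) ≠ 0 := by
  have hnorm : ‖q + q ^ (n + 2)‖ < 1 :=
    calc ‖q + q ^ (n + 2)‖ ≤ ‖q‖ + ‖q‖ ^ 2 := (norm_add_le _ _).trans
          (by gcongr; exact norm_pow_add_two_le (by nlinarith [sq_nonneg ‖q‖]) n)
      _ < 1 := by linarith
  rw [sub_sub]
  exact (isUnit_one_sub_of_norm_lt_one hnorm).ne_zero

theorem zbarPoly_ne_zero_of_norm_lt (hq : ‖q‖ ^ 2 + 2 * ‖q‖ < 1) (n : ℕ) :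
    zbarPoly n q ≠ 0 := by
  have hnorm : ‖2 * q - q ^ (n + 2)‖ < 1 :=
    calc ‖2 * q - q ^ (n + 2)‖ ≤ ‖2 * q‖ + ‖q ^ (n + 2)‖ := norm_sub_le _ _
      _ ≤ 2 * ‖q‖ + ‖q‖ ^ 2 := by
        rw [norm_mul, Complex.norm_ofNat]
        gcongr
        exact norm_pow_add_two_le (by linarith [norm_lt_half hq]) n
      _ < 1 := by linarith
  rw [zbarPoly, sub_add]
  exact (isUnit_one_sub_of_norm_lt_one hnorm).ne_zero

theorem norm_sq_lt_norm_one_sub_two_mul (hq : ‖q‖ ^ 2 + 2 * ‖q‖ < 1) :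
    ‖q ^ 2‖ < ‖1 - 2 * q‖ := by
  have hle := norm_sub_norm_le 1 (2 * q)
  rw [norm_one, norm_mul, Complex.norm_ofNat] at hle
  rw [norm_pow]
  linarith

theorem PAterm_one (q : ℂ) : PAterm q 1 = -q ^ 2 / ((1 - 2 * q) * (1 - q - q ^ 2)) := by
  simp [PAterm]

theorem isQHypergeometric_PAterm (htwo : 1 - 2 * q ≠ 0) (hpow : ∀ n, 1 - q - q ^ (n + 2) ≠ 0) :
    IsQHypergeometric q ((1 - q) * (1 - 2 * q)) (q ^ 2 * (1 - 2 * q)) (-q ^ 2 * (1 - q))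
      (-q ^ 3 * (1 - q + q ^ 2)) fun m ↦ PAterm q (m + 1) := by
  intro m
  have hm := hpow m
  have hm' : 1 - q - q ^ (m + 1 + 1 + 1) ≠ 0 := hpow (m + 1)
  simp only [PAterm, Nat.add_sub_cancel, Finset.prod_Icc_succ_top (Nat.le_add_left 1 m)]
  field_simp
  ring

theorem summable_norm_PAterm (hq : ‖q‖ ^ 2 + 2 * ‖q‖ < 1) :
    Summable fun m ↦ ‖PAterm q (m + 1)‖ := by
  have hmem := mem_puncGoldenDisc_of_norm_lt hq
  refine (isQHypergeometric_PAterm (one_sub_two_mul_ne_zero_of_mem hmem)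
    (one_sub_sub_pow_ne_zero hmem.1)).summable_norm (by linarith [norm_lt_half hq]) ?_
  rw [norm_mul, norm_neg, norm_mul, mul_comm]
  exact mul_lt_mul_of_pos_left (norm_sq_lt_norm_one_sub_two_mul hq)
    (norm_pos_iff.mpr (one_sub_ne_zero_of_mem hmem))

theorem genFun_PAterm_recurrence (hq : ‖q‖ ^ 2 + 2 * ‖q‖ < 1) (j : ℕ) :
    (1 - q) * zbarPoly j q * genFun (fun m ↦ PAterm q (m + 1)) (q ^ j) =
      -q ^ 2 + kernelNum j q * genFun (fun m ↦ PAterm q (m + 1)) (q ^ (j + 1)) := by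
  have hmem := mem_puncGoldenDisc_of_norm_lt hq
  have htwo := one_sub_two_mul_ne_zero_of_mem hmem
  have hpow := one_sub_sub_pow_ne_zero hmem.1
  have hq1 : ‖q‖ ≤ 1 := by linarith [norm_lt_half hq]
  have hqj : ‖q ^ j‖ ≤ 1 := by
    rw [norm_pow]
    exact pow_le_one₀ (norm_nonneg q) hq1
  have hinit : PAterm q 1 * ((1 - 2 * q) * (1 - q - q ^ 2)) = -q ^ 2 := by
    rw [PAterm_one, div_mul_cancel₀ _ (mul_ne_zero htwo (hpow 0))]
  have hdiff := (isQHypergeometric_PAterm htwo hpow).genFun_qDifference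
    (summable_norm_PAterm hq) hq1 hqj
  simp only [zero_add, ← pow_succ'] at hdiff
  rw [zbarPoly, kernelNum]
  linear_combination hdiff + hinit

theorem one_sub_pow_three_mul_tsum_PAterm (hq : ‖q‖ ^ 2 + 2 * ‖q‖ < 1) :
    (1 - q) ^ 3 * ∑' m : ℕ, PAterm q (m + 1) = -q ^ 2 * kernelSeries 0 q := by
  have hmem := mem_puncGoldenDisc_of_norm_lt hq
  have hq1 : ‖q‖ < 1 := by linarith [norm_lt_half hq]
  obtain ⟨ρ, hρ, hr⟩ := exists_eventually_norm_kernelRatio_le hmem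
  set F : ℂ → ℂ := genFun fun m ↦ PAterm q (m + 1) with hF
  have hrec (j : ℕ) : (1 - q) * zbarPoly j q * F (q ^ j) =
      -q ^ 2 + kernelRatio j q * ((1 - q) * zbarPoly (j + 1) q * F (q ^ (j + 1))) := by
    rw [hF, genFun_PAterm_recurrence hq, kernelRatio, ← mul_assoc, div_mul_cancel₀ _ (mul_ne_zero
      (one_sub_ne_zero_of_mem hmem) (zbarPoly_ne_zero_of_norm_lt hq _))]
  have hzbar : Tendsto (zbarPoly · q) atTop (𝓝 (1 - 2 * q)) := by
    simpa [zbarPoly] using ((tendsto_add_atTop_iff_nat 2).mpr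
      (tendsto_pow_atTop_nhds_zero_of_norm_lt_one hq1)).const_add (1 - 2 * q)
  have hlim : Tendsto (fun j ↦ (1 - q) * zbarPoly j q * F (q ^ j)) atTop
      (𝓝 ((1 - q) * (1 - 2 * q) * PAterm q 1)) :=
    (hzbar.const_mul (1 - q)).mul (tendsto_genFun_pow (summable_norm_PAterm hq) hq1)
  have hsol := eq_mul_nestedSeries_of_recurrence hρ hr hrec hlim.norm.isBoundedUnder_le 0
  calc (1 - q) ^ 3 * ∑' m : ℕ, PAterm q (m + 1) = (1 - q) * zbarPoly 0 q * F (q ^ 0) := by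
        simp only [hF, genFun, zbarPoly, pow_zero, one_pow, mul_one]
        ring
    _ = -q ^ 2 * kernelSeries 0 q := hsol

/-- The analytic continuation of `PAseries` to `puncGoldenDisc`. -/
def PAcont (q : ℂ) : ℂ := 2 * q ^ 5 / ((1 - q) * (1 - 2 * q) ^ 2) * kernelSeries 0 q + CF q

theorem PAcont_eq_PAseries (hq : ‖q‖ ^ 2 + 2 * ‖q‖ < 1) : PAcont q = PAseries q := by
  have hmem := mem_puncGoldenDisc_of_norm_lt hq
  have hone := one_sub_ne_zero_of_mem hmem
  have htwo := one_sub_two_mul_ne_zero_of_mem hmem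
  have hkernel : -2 * q ^ 3 * (1 - q) ^ 2 / (1 - 2 * q) ^ 2 * ∑' m : ℕ, PAterm q (m + 1) =
      2 * q ^ 5 / ((1 - q) * (1 - 2 * q) ^ 2) * kernelSeries 0 q := by
    field_simp
    linear_combination -q ^ 3 * one_sub_pow_three_mul_tsum_PAterm hq
  rw [PAcont, PAseries, hkernel, CF, mul_comm (1 - q)]

theorem analyticAt_div_one_sub_mul_one_sub_two_mul_sq {f : ℂ → ℂ} (hf : AnalyticAt ℂ f q)
    (hq : q ∈ puncGoldenDisc) : AnalyticAt ℂ (fun z ↦ f z / ((1 - z) * (1 - 2 * z) ^ 2)) q :=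
  hf.div (by fun_prop) (mul_ne_zero (one_sub_ne_zero_of_mem hq)
    (pow_ne_zero 2 (one_sub_two_mul_ne_zero_of_mem hq)))

theorem analyticAt_CF (hq : q ∈ puncGoldenDisc) : AnalyticAt ℂ CF q :=
  analyticAt_div_one_sub_mul_one_sub_two_mul_sq (by fun_prop) hq

theorem analyticAt_PAcont (hq : q ∈ puncGoldenDisc) (h : ∀ n, zbarPoly n q ≠ 0) :
    AnalyticAt ℂ PAcont q :=
  ((analyticAt_div_one_sub_mul_one_sub_two_mul_sq (by fun_prop) hq).mul
    (analyticAt_kernelSeries hq fun n _ ↦ h n)).add (analyticAt_CF hq)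

theorem IsZbar.meromorphicOrderAt_PAcont (h : IsZbar k x) (hk : 2 ≤ k) :
    meromorphicOrderAt PAcont x = -1 := by
  have hmem := h.mem_puncGoldenDisc hk
  have hx : (x : ℂ) ≠ 0 := Complex.ofReal_ne_zero.mpr h.1.1.ne'
  set prefactor : ℂ → ℂ := fun z ↦ 2 * z ^ 5 / ((1 - z) * (1 - 2 * z) ^ 2)
  have han : AnalyticAt ℂ prefactor x :=
    analyticAt_div_one_sub_mul_one_sub_two_mul_sq (by fun_prop) hmem
  have hne : prefactor x ≠ 0 := div_ne_zero (mul_ne_zero two_ne_zero (pow_ne_zero 5 hx))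
    (mul_ne_zero (one_sub_ne_zero_of_mem hmem)
      (pow_ne_zero 2 (one_sub_two_mul_ne_zero_of_mem hmem)))
  have hpole : meromorphicOrderAt (prefactor * kernelSeries 0) x = -1 := by
    rw [meromorphicOrderAt_mul_of_ne_zero han hne]
    exact h.meromorphicOrderAt_kernelSeries hk (by omega)
  have hlt : meromorphicOrderAt (prefactor * kernelSeries 0) x < meromorphicOrderAt CF x := by
    refine lt_of_lt_of_le ?_ (analyticAt_CF hmem).meromorphicOrderAt_nonneg
    rw [hpole]
    decide
  rw [show PAcont = prefactor * kernelSeries 0 + CF from rfl,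
    meromorphicOrderAt_add_eq_left_of_lt (analyticAt_CF hmem).meromorphicAt hlt, hpole]

theorem exists_eventually_eq_div_sub_of_meromorphicOrderAt_eq_neg_one {𝕜 : Type*}
    [NontriviallyNormedField 𝕜] {f : 𝕜 → 𝕜} {a : 𝕜} (h : meromorphicOrderAt f a = -1) :
    ∃ g : 𝕜 → 𝕜, AnalyticAt 𝕜 g a ∧ g a ≠ 0 ∧ ∀ᶠ z in 𝓝[≠] a, f z = g z / (z - a) := by
  have hmer : MeromorphicAt f a := meromorphicAt_of_meromorphicOrderAt_ne_zero (by rw [h]; decide)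
  obtain ⟨g, hg, hg0, hfg⟩ := (meromorphicOrderAt_eq_int_iff (n := -1) hmer).mp h
  refine ⟨g, hg, hg0, hfg.mono fun z hz ↦ ?_⟩
  rw [hz, zpow_neg_one, smul_eq_mul, inv_mul_eq_div]

theorem PA_meromorphic_simple_poles_general (zbar : ℕ → ℝ)
    (hzbar : ∀ k : ℕ, 2 ≤ k → IsZbar k (zbar k)) :
    ∃ f : ℂ → ℂ,
      (∀ q : ℂ, ‖q‖ ^ 2 + 2 * ‖q‖ < 1 → f q = PAseries q) ∧
      MeromorphicOn f puncGoldenDisc ∧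
      (∀ q ∈ puncGoldenDisc, (¬∃ k : ℕ, 2 ≤ k ∧ q = (zbar k : ℂ)) → AnalyticAt ℂ f q) ∧
      (∀ k : ℕ, 2 ≤ k →
        ∃ g : ℂ → ℂ, AnalyticAt ℂ g (zbar k : ℂ) ∧ g (zbar k : ℂ) ≠ 0 ∧
          ∀ᶠ z in 𝓝[≠] (zbar k : ℂ), f z = g z / (z - (zbar k : ℂ))) := by
  have hpole (k : ℕ) (hk : 2 ≤ k) : meromorphicOrderAt PAcont (zbar k) = -1 :=
    (hzbar k hk).meromorphicOrderAt_PAcont hk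
  have han (q : ℂ) (hq : q ∈ puncGoldenDisc) (h : ¬∃ k : ℕ, 2 ≤ k ∧ q = (zbar k : ℂ)) :
      AnalyticAt ℂ PAcont q :=
    analyticAt_PAcont hq fun _ hn ↦ h (exists_eq_zbar_of_zbarPoly_eq_zero hzbar hq hn)
  refine ⟨PAcont, fun q ↦ PAcont_eq_PAseries, fun q hq ↦ ?_, han, fun k hk ↦
    exists_eventually_eq_div_sub_of_meromorphicOrderAt_eq_neg_one (hpole k hk)⟩
  by_cases h : ∃ k : ℕ, 2 ≤ k ∧ q = (zbar k : ℂ)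
  · obtain ⟨k, hk, rfl⟩ := h
    exact meromorphicAt_of_meromorphicOrderAt_ne_zero (by rw [hpole k hk]; decide)
  · exact (han q hq h).meromorphicAt

end PA

/-- In the punctured disc `{|q| < 55/100} \ {1/2}`, the analytic continuation of `PA`
is meromorphic, with poles exactly the simple poles at the points `z̄_k`, `k ≥ 2`,
where `z̄_k` is the unique root in `(0,1)` of `1 - 2x + x^{k+2}`. -/
theorem PA_meromorphic_simple_poles :
    ∀ zbar : ℕ → ℝ,
      (∀ k : ℕ, 2 ≤ k → zbar k ∈ Set.Ioo (0 : ℝ) 1 ∧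
        1 - 2 * zbar k + zbar k ^ (k + 2) = 0) →
      ∃ f : ℂ → ℂ,
        (∀ q : ℂ, ‖q‖ < 1 / 10 → f q = PAseries q) ∧
        MeromorphicOn f puncDisc ∧
        (∀ q ∈ puncDisc, (¬∃ k : ℕ, 2 ≤ k ∧ q = (zbar k : ℂ)) → AnalyticAt ℂ f q) ∧
        (∀ k : ℕ, 2 ≤ k →
          ∃ g : ℂ → ℂ, AnalyticAt ℂ g (zbar k : ℂ) ∧ g (zbar k : ℂ) ≠ 0 ∧
            ∀ᶠ z in 𝓝[≠] (zbar k : ℂ), f z = g z / (z - (zbar k : ℂ))) := by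
  intro zbar hzbar
  obtain ⟨f, hseries, hmer, han, hpole⟩ := PA_meromorphic_simple_poles_general zbar hzbar
  exact ⟨f, fun q hq ↦ hseries q (by nlinarith [norm_nonneg q]),
    fun q hq ↦ hmer q (puncDisc_subset_puncGoldenDisc hq),
    fun q hq ↦ han q (puncDisc_subset_puncGoldenDisc hq), hpole⟩
end
end

section
/- There exist ε₀ > 0 and ε₁ > 0 such that for all real q ∈ (1/2-ε₀, 1/2+ε₀), all real v ∈ (3/2-ε₁, 3/2+ε₁), every integer j ≥ 0, and every s ∈ ℂ with max(0, -j + γ) < Re(s) < 1 where γ = log v / log(1/q), the Mellin transform ∫_0^∞ h_j(t;q,v) t^{s-1} dt converges absolutely and equals q^{-2} · (π/sin(πs)) · v q^{j+3s} / (1 - v q^{j+s}), where q^{w} := exp(w log q) for w ∈ ℂ. -/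
/-!
A series `∑ᵢ cᵢ f(t / aᵢ)` is a multiplicative convolution, so its Mellin transform factors as
`(∑ᵢ cᵢ aᵢˢ) · f*(s)`, with absolute convergence as soon as the Dirichlet series converges
absolutely and `f*` exists at `s`. For `h_j` the base function is `f(t) = 1 / (1 + t)`, whose
transform is the beta integral `B(s, 1 - s) = π / sin(πs)` after substituting `t = x / (1 - x)`,
and the Dirichlet series is geometric with ratio `v q^(j+s)`. The condition `Re s > -j + γ` says
exactly that this ratio has modulus less than `1`.
-/

open Filter Topology MeasureTheory Complex

noncomputable section

/-- `h_j(t;q,v) = q^{-2} ∑_{ν≥1} (v q^j)^ν / (1 + t q^{-ν-2})` -/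
def hfun (q v : ℝ) (j : ℕ) (t : ℝ) : ℝ :=
  (∑' ν : ℕ, (v * q ^ j) ^ (ν + 1) / (1 + t / q ^ (ν + 3))) / q ^ 2

section Mellin

variable {E : Type*} [NormedAddCommGroup E] {ι : Type*} [Countable ι]

theorem integrable_tsum_of_summable_integral_norm [CompleteSpace E] {α : Type*}
    [MeasurableSpace α] {μ : Measure α} {F : ι → α → E} (hF : ∀ i, Integrable (F i) μ)
    (hsum : Summable fun i ↦ ∫ a, ‖F i a‖ ∂μ) :
    Integrable (fun a ↦ ∑' i, F i a) μ := by
  have hL1 : ∑' i, ‖(hF i).toL1 (F i)‖ₑ ≠ ⊤ := by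
    simpa only [tsum_enorm_ne_top_iff_summable_norm, L1.norm_of_fun_eq_integral_norm] using hsum
  refine (L1.integrable_coeFn (∑' i, (hF i).toL1 (F i))).congr ?_
  filter_upwards [Lp.coeFn_tsum hL1, ae_all_iff.2 fun i ↦ (hF i).coeFn_toL1] with a htsum hcoe
  rw [htsum]
  exact tsum_congr hcoe

variable [NormedSpace ℂ E] {f : ℝ → E} {s : ℂ}

theorem hasMellin_tsum [CompleteSpace E] {F : ι → ℝ → E} (hF : ∀ i, MellinConvergent (F i) s)
    (hsum : Summable fun i ↦ ∫ t in Set.Ioi (0 : ℝ), ‖(t : ℂ) ^ (s - 1) • F i t‖) :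
    HasMellin (fun t ↦ ∑' i, F i t) s (∑' i, mellin (F i) s) := by
  simp only [HasMellin, MellinConvergent, mellin, ← tsum_const_smul'']
  exact ⟨integrable_tsum_of_summable_integral_norm hF hsum,
    (integral_tsum_of_summable_integral_norm hF hsum).symm⟩

theorem hasMellin_comp_div {m : E} (hf : HasMellin f s m) {a : ℝ} (ha : 0 < a) :
    HasMellin (fun t ↦ f (t / a)) s ((a : ℂ) ^ s • m) := by
  have ha' : 0 < a⁻¹ := inv_pos.2 ha
  simp only [div_eq_inv_mul]
  refine ⟨(MellinConvergent.comp_mul_left ha').2 hf.1, ?_⟩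
  rw [mellin_comp_mul_left f s ha', hf.2, ofReal_inv, inv_cpow_ofReal_nonneg ha.le, cpow_neg,
    inv_inv]

theorem integral_norm_cpow_smul_comp_div (f : ℝ → E) (s : ℂ) {a : ℝ} (ha : 0 < a) :
    ∫ t in Set.Ioi (0 : ℝ), ‖(t : ℂ) ^ (s - 1) • f (t / a)‖ =
      a ^ s.re * ∫ t in Set.Ioi (0 : ℝ), ‖(t : ℂ) ^ (s - 1) • f t‖ := by
  have hscale : ∀ t ∈ Set.Ioi (0 : ℝ), ‖(t : ℂ) ^ (s - 1) • f (t / a)‖ =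
      a ^ (s.re - 1) * ‖((a⁻¹ * t : ℝ) : ℂ) ^ (s - 1) • f (a⁻¹ * t)‖ := by
    intro t (ht : 0 < t)
    rw [norm_smul, norm_smul, norm_cpow_eq_rpow_re_of_pos ht,
      norm_cpow_eq_rpow_re_of_pos (by positivity), sub_re, one_re,
      Real.mul_rpow (by positivity) ht.le, Real.inv_rpow ha.le, div_eq_inv_mul]
    field_simp
  rw [setIntegral_congr_fun measurableSet_Ioi hscale, integral_const_mul,
    integral_comp_mul_left_Ioi (fun t ↦ ‖(t : ℂ) ^ (s - 1) • f t‖) 0 (inv_pos.2 ha), mul_zero,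
    inv_inv, smul_eq_mul, ← mul_assoc, ← Real.rpow_add_one ha.ne', sub_add_cancel]

theorem hasMellin_tsum_smul_comp_div [CompleteSpace E] {m : E} (hf : HasMellin f s m)
    {c : ι → ℂ} {a : ι → ℝ} (ha : ∀ i, 0 < a i) {D : ℂ}
    (hD : HasSum (fun i ↦ c i * (a i : ℂ) ^ s) D) :
    HasMellin (fun t ↦ ∑' i, c i • f (t / a i)) s (D • m) := by
  have hterm : ∀ i, HasMellin (fun t ↦ c i • f (t / a i)) s ((c i * (a i : ℂ) ^ s) • m) := by
    intro i
    have hdil := hasMellin_comp_div hf (ha i)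
    simpa only [hdil.2, smul_smul] using hasMellin_const_smul hdil.1 (c i)
  have hnorm : ∀ i, ∫ t in Set.Ioi (0 : ℝ), ‖(t : ℂ) ^ (s - 1) • c i • f (t / a i)‖ =
      ‖c i * (a i : ℂ) ^ s‖ * ∫ t in Set.Ioi (0 : ℝ), ‖(t : ℂ) ^ (s - 1) • f t‖ := by
    intro i
    simp only [smul_comm _ (c i), norm_smul (c i)]
    rw [integral_const_mul, integral_norm_cpow_smul_comp_div f s (ha i), norm_mul,
      norm_cpow_eq_rpow_re_of_pos (ha i), mul_assoc]
  have hsum : Summable fun i ↦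
      ∫ t in Set.Ioi (0 : ℝ), ‖(t : ℂ) ^ (s - 1) • c i • f (t / a i)‖ := by
    simpa only [hnorm] using hD.summable.norm.mul_right _
  have htsum : ∑' i, mellin (fun t ↦ c i • f (t / a i)) s = D • m := by
    simp only [(hterm _).2]
    exact (hD.smul_const m).tsum_eq
  exact htsum ▸ hasMellin_tsum (fun i ↦ (hterm i).1) hsum

end Mellin

section Beta

theorem bijOn_div_one_sub_Ioo_Ioi :
    Set.BijOn (fun x : ℝ ↦ x / (1 - x)) (Set.Ioo 0 1) (Set.Ioi 0) := by
  refine Set.InvOn.bijOn (f' := fun t : ℝ ↦ t / (1 + t)) ⟨?_, ?_⟩ ?_ ?_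
  · rintro x ⟨-, hx⟩
    have : 1 - x ≠ 0 := (sub_pos.2 hx).ne'
    field_simp
    ring
  · intro t (ht : 0 < t)
    have : 1 + t ≠ 0 := by positivity
    field_simp
    ring
  · rintro x ⟨hx₀, hx₁⟩
    exact div_pos hx₀ (sub_pos.2 hx₁)
  · intro t (ht : 0 < t)
    exact ⟨by positivity, (div_lt_one (by positivity)).2 (by linarith)⟩

theorem hasDerivAt_div_one_sub {x : ℝ} (hx : x ≠ 1) :
    HasDerivAt (fun x : ℝ ↦ x / (1 - x)) (1 / (1 - x) ^ 2) x := by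
  refine ((hasDerivAt_id' x).fun_div ((hasDerivAt_id' x).const_sub 1)
    (sub_ne_zero.2 hx.symm)).congr_deriv ?_
  ring

theorem abs_deriv_smul_mellinIntegrand_eq_betaIntegrand (u v : ℂ) {x : ℝ}
    (hx : x ∈ Set.Ioo (0 : ℝ) 1) :
    |1 / (1 - x) ^ 2| •
        (((x / (1 - x) : ℝ) : ℂ) ^ (u - 1) • (1 + ((x / (1 - x) : ℝ) : ℂ)) ^ (-(u + v))) =
      (x : ℂ) ^ (u - 1) * (1 - (x : ℂ)) ^ (v - 1) := by
  obtain ⟨hx₀, hx₁⟩ := hx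
  have hy : 0 < 1 - x := sub_pos.2 hx₁
  have hxy : 1 + ((x / (1 - x) : ℝ) : ℂ) = ((1 - x : ℝ) : ℂ)⁻¹ := by
    rw [← ofReal_inv, ← ofReal_one, ← ofReal_add]
    congr 1
    field_simp
    ring
  have hy_ne : ((1 - x : ℝ) : ℂ) ≠ 0 := ofReal_ne_zero.2 hy.ne'
  have hsub : 1 - (x : ℂ) = ((1 - x : ℝ) : ℂ) := by rw [ofReal_sub, ofReal_one]
  have hexp : ((1 - x : ℝ) : ℂ) ^ (v - 1) =
      (((1 - x : ℝ) : ℂ) ^ 2)⁻¹ * (((1 - x : ℝ) : ℂ) ^ (u - 1))⁻¹ *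
        ((1 - x : ℝ) : ℂ) ^ (u + v) := by
    rw [← cpow_ofNat, ← cpow_neg, ← cpow_neg, ← cpow_add _ _ hy_ne, ← cpow_add _ _ hy_ne]
    congr 1
    ring
  rw [hxy, abs_of_pos (by positivity), real_smul, smul_eq_mul, ofReal_div x,
    div_cpow_ofReal_nonneg hx₀.le hy.le, inv_cpow_ofReal_nonneg hy.le, cpow_neg, inv_inv,
    hsub, hexp]
  push_cast
  ring

theorem hasMellin_one_add_cpow_neg {u v : ℂ} (hu : 0 < u.re) (hv : 0 < v.re) :
    HasMellin (fun t : ℝ ↦ (1 + (t : ℂ)) ^ (-(u + v))) u (betaIntegral u v) := by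
  have himage := bijOn_div_one_sub_Ioo_Ioi.image_eq
  have hinj := bijOn_div_one_sub_Ioo_Ioi.injOn
  have hderiv : ∀ x ∈ Set.Ioo (0 : ℝ) 1,
      HasDerivWithinAt (fun x : ℝ ↦ x / (1 - x)) (1 / (1 - x) ^ 2) (Set.Ioo 0 1) x :=
    fun x hx ↦ (hasDerivAt_div_one_sub hx.2.ne).hasDerivWithinAt
  have hbeta := fun x ↦ abs_deriv_smul_mellinIntegrand_eq_betaIntegrand u v (x := x)
  constructor
  · rw [MellinConvergent, ← himage,
      integrableOn_image_iff_integrableOn_abs_deriv_smul measurableSet_Ioo hderiv hinj,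
      integrableOn_congr_fun hbeta measurableSet_Ioo,
      ← intervalIntegrable_iff_integrableOn_Ioo_of_le zero_le_one]
    exact betaIntegral_convergent hu hv
  · rw [mellin, ← himage, integral_image_eq_integral_abs_deriv_smul measurableSet_Ioo hderiv hinj,
      setIntegral_congr_fun measurableSet_Ioo hbeta, ← integral_Ioc_eq_integral_Ioo,
      ← intervalIntegral.integral_of_le zero_le_one, betaIntegral]

theorem hasMellin_inv_one_add {s : ℂ} (hs₀ : 0 < s.re) (hs₁ : s.re < 1) :
    HasMellin (fun t : ℝ ↦ (1 + (t : ℂ))⁻¹) s (Real.pi / Complex.sin (Real.pi * s)) := by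
  have hs₁' : 0 < (1 - s).re := by simpa using hs₁
  have hbeta : betaIntegral s (1 - s) = Real.pi / Complex.sin (Real.pi * s) := by
    rw [betaIntegral_eq_Gamma_mul_div s (1 - s) hs₀ hs₁', add_sub_cancel, Gamma_one, div_one,
      Gamma_mul_Gamma_one_sub]
  simpa only [add_sub_cancel, cpow_neg_one, hbeta] using hasMellin_one_add_cpow_neg hs₀ hs₁'

end Beta

theorem hasSum_geometric_mul_cpow {q : ℝ} (hq : 0 < q) {v : ℂ} {j : ℕ} {s : ℂ}
    (h : ‖v‖ * q ^ (j + s.re) < 1) :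
    HasSum (fun n : ℕ ↦ (v * (q : ℂ) ^ j) ^ (n + 1) * ((q ^ (n + 3) : ℝ) : ℂ) ^ s)
      (v * (q : ℂ) ^ (j + 3 * s) / (1 - v * (q : ℂ) ^ (j + s))) := by
  have hratio : ‖v * (q : ℂ) ^ (j + s)‖ < 1 := by
    rwa [norm_mul, norm_cpow_eq_rpow_re_of_pos hq, add_re, natCast_re]
  have hterm : ∀ n : ℕ, (v * (q : ℂ) ^ j) ^ (n + 1) * ((q ^ (n + 3) : ℝ) : ℂ) ^ s =
      v * (q : ℂ) ^ (j + 3 * s) * (v * (q : ℂ) ^ (j + s)) ^ n := by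
    intro n
    have hq_ne : (q : ℂ) ≠ 0 := ofReal_ne_zero.2 hq.ne'
    have hpow : ((q ^ (n + 3) : ℝ) : ℂ) ^ s = ((q : ℂ) ^ s) ^ (n + 3) := by
      rw [← Real.rpow_natCast, ← cpow_mul_ofReal_nonneg hq.le, ofReal_natCast, cpow_nat_mul]
    rw [hpow, cpow_add _ _ hq_ne, cpow_add _ _ hq_ne, cpow_natCast, cpow_ofNat_mul]
    ring
  simpa only [hterm, div_eq_mul_inv] using (hasSum_geometric_of_norm_lt_one hratio).mul_left _

theorem abs_mul_rpow_lt_one_iff {q v x : ℝ} (hq₀ : 0 < q) (hq₁ : q < 1) (hv : v ≠ 0) :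
    |v| * q ^ x < 1 ↔ Real.log v / Real.log (1 / q) < x := by
  have hlog : 0 < Real.log (1 / q) := Real.log_pos ((one_lt_div hq₀).2 hq₁)
  have hqx : 0 < q ^ x := Real.rpow_pos_of_pos hq₀ x
  rw [div_lt_iff₀ hlog, ← Real.log_neg_iff (mul_pos (abs_pos.2 hv) hqx),
    Real.log_mul (abs_ne_zero.2 hv) hqx.ne', Real.log_abs, Real.log_rpow hq₀, one_div,
    Real.log_inv, mul_neg, ← lt_neg_iff_add_neg]

theorem hfun_mellin_transform_general {q v : ℝ} (hq : 0 < q) {j : ℕ} {s : ℂ}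
    (h : |v| * q ^ (j + s.re) < 1) (hs₀ : 0 < s.re) (hs₁ : s.re < 1) :
    HasMellin (fun t ↦ (hfun q v j t : ℂ)) s
      ((1 / (q : ℂ) ^ 2) * ((Real.pi : ℂ) / Complex.sin (Real.pi * s)) *
        (v : ℂ) * (q : ℂ) ^ ((j : ℂ) + 3 * s) / (1 - (v : ℂ) * (q : ℂ) ^ ((j : ℂ) + s))) := by
  have hgeom := hasSum_geometric_mul_cpow hq (v := v) (by rwa [norm_real])
  have hseries := hasMellin_tsum_smul_comp_div (hasMellin_inv_one_add hs₀ hs₁)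
    (fun n : ℕ ↦ pow_pos hq (n + 3)) hgeom
  convert! hasMellin_const_smul hseries.1 (1 / (q : ℂ) ^ 2) using 1
  · funext t
    simp only [hfun, smul_eq_mul, div_eq_mul_inv]
    push_cast
    ring
  · rw [hseries.2, smul_eq_mul, smul_eq_mul]
    ring

/-- For `q` near `1/2`, `v` near `3/2`, `j ≥ 0` and `max(0, -j+γ) < Re(s) < 1`, the
Mellin transform of `h_j` converges absolutely and equals
`q^{-2} (π/sin πs) v q^{j+3s}/(1 - v q^{j+s})`. -/
theorem hfun_mellin_transform :
    ∃ ε₀ : ℝ, 0 < ε₀ ∧ ∃ ε₁ : ℝ, 0 < ε₁ ∧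
      ∀ q v : ℝ, |q - 1 / 2| < ε₀ → |v - 3 / 2| < ε₁ →
        ∀ j : ℕ, ∀ s : ℂ,
          max 0 (-(j : ℝ) + Real.log v / Real.log (1 / q)) < s.re → s.re < 1 →
          IntegrableOn (fun t : ℝ => (hfun q v j t : ℂ) * (t : ℂ) ^ (s - 1))
            (Set.Ioi (0 : ℝ)) ∧
          ∫ t in Set.Ioi (0 : ℝ), (hfun q v j t : ℂ) * (t : ℂ) ^ (s - 1) =
            (1 / (q : ℂ) ^ 2) * ((Real.pi : ℂ) / Complex.sin (Real.pi * s)) *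
              (v : ℂ) * (q : ℂ) ^ ((j : ℂ) + 3 * s) /
              (1 - (v : ℂ) * (q : ℂ) ^ ((j : ℂ) + s)) := by
  refine ⟨1 / 2, by norm_num, 3 / 2, by norm_num, fun q v hq hv j s hs hs₁ ↦ ?_⟩
  rw [abs_lt] at hq hv
  have hv₀ : 0 < v := by linarith
  rw [max_lt_iff, neg_add_lt_iff_lt_add,
    ← abs_mul_rpow_lt_one_iff (by linarith) (by linarith) hv₀.ne'] at hs
  simpa only [HasMellin, MellinConvergent, mellin, smul_eq_mul, mul_comm] using
    hfun_mellin_transform_general (by linarith) hs.2 hs.1 hs₁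
end
end
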